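/- arXiv:2009.14077 — 2 statements merged into one kernel-verified Lean document; each statement's English description precedes it below -/
import Mathlib

section
/- Assume the family Ψ_n satisfies property (P1) (the exchange relations). Then for each n ≥ 1 and each i = 1,…,n: ϑ₄(2(η+x_i),p²)·Z_n(…,−x_i,…) = ϑ₄(2(η−x_i),p²)·Z_n(…,x_i,…), and ϑ₁(2(η+x_i),p²)·Z̄_n^±(…,−x_i,…) = ϑ₁(2(η−x_i),p²)·Z̄_n^±(…,x_i,…). -/
noncomputable section

open Complex
open scoped BigOperators

/-- Jacobi theta function `ϑ₁(z|τ)` with nome `p = e^{iπτ}` (Whittaker–Watson convention). -/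
def th1 (z τ : ℂ) : ℂ :=
  -Complex.I * ∑' n : ℤ, (-1 : ℂ) ^ n *
    Complex.exp ((Real.pi : ℂ) * Complex.I * τ * ((n : ℂ) + 1/2) ^ 2 + (2 * (n : ℂ) + 1) * Complex.I * z)

/-- Jacobi theta function `ϑ₂(z|τ)`. -/
def th2 (z τ : ℂ) : ℂ :=
  ∑' n : ℤ,
    Complex.exp ((Real.pi : ℂ) * Complex.I * τ * ((n : ℂ) + 1/2) ^ 2 + (2 * (n : ℂ) + 1) * Complex.I * z)

/-- Jacobi theta function `ϑ₃(z|τ)`. -/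
def th3 (z τ : ℂ) : ℂ :=
  ∑' n : ℤ, Complex.exp ((Real.pi : ℂ) * Complex.I * τ * (n : ℂ) ^ 2 + 2 * (n : ℂ) * Complex.I * z)

/-- Jacobi theta function `ϑ₄(z|τ)`. -/
def th4 (z τ : ℂ) : ℂ :=
  ∑' n : ℤ, (-1 : ℂ) ^ n *
    Complex.exp ((Real.pi : ℂ) * Complex.I * τ * (n : ℂ) ^ 2 + 2 * (n : ℂ) * Complex.I * z)

/-- The crossing parameter `η = π/3`. -/
def ηc : ℂ := (Real.pi : ℂ) / 3

/-- The elliptic nome `p = e^{iπτ}`. -/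
def pnome (τ : ℂ) : ℂ := Complex.exp ((Real.pi : ℂ) * Complex.I * τ)

/-- `ζ = (ϑ₁(η,p²)/ϑ₄(η,p²))²`. -/
def zet (τ : ℂ) : ℂ := (th1 ηc (2 * τ) / th4 ηc (2 * τ)) ^ 2

/-- The nome `p` is real with `0 < p < 1`. -/
def preal (τ : ℂ) : Prop := (pnome τ).im = 0 ∧ 0 < (pnome τ).re ∧ (pnome τ).re < 1

/-- A tuple given by a list of prescribed entries, padded by zeros. -/
def padded {n : ℕ} (l : List ℂ) : Fin n → ℂ := fun j => l.getD (j : ℕ) 0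

/-- Extension of a tuple by a list of prescribed further entries (padded by zeros). -/
def extL {m n : ℕ} (w : Fin m → ℂ) (l : List ℂ) : Fin n → ℂ :=
  fun j => if h : (j : ℕ) < m then w ⟨j, h⟩ else l.getD ((j : ℕ) - m) 0

/-- First `k` entries of a `2k`-tuple. -/
def firstHalf {k : ℕ} (x : Fin (2 * k) → ℂ) : Fin k → ℂ :=
  fun i => x ⟨(i : ℕ), by have := i.2; omega⟩

/-- Last `k` entries of a `2k`-tuple. -/
def secondHalf {k : ℕ} (x : Fin (2 * k) → ℂ) : Fin k → ℂ :=
  fun i => x ⟨k + (i : ℕ), by have := i.2; omega⟩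

/-- `𝕙(x,y) = ϑ₁(x−y+η)ϑ₁(x−y−η)ϑ₁(x+y+η)ϑ₁(x+y−η)`. -/
def hh (τ x y : ℂ) : ℂ :=
  th1 (x - y + ηc) τ * th1 (x - y - ηc) τ * th1 (x + y + ηc) τ * th1 (x + y - ηc) τ

/-- `𝔻(x₁,…,x_k) = ∏_{i<j} ϑ₁(x_j−x_i)ϑ₁(x_j+x_i)`. -/
def vdTheta (τ : ℂ) {k : ℕ} (y : Fin k → ℂ) : ℂ :=
  ∏ i : Fin k, ∏ j : Fin k, if i < j then th1 (y j - y i) τ * th1 (y j + y i) τ else 1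

/-- The elliptic Tsuchiya determinant `ℍ_{2k}(x₁,…,x_k; x_{k+1},…,x_{2k})`. -/
def tsuchiya (τ : ℂ) (k : ℕ) (x : Fin (2 * k) → ℂ) : ℂ :=
  (∏ i : Fin k, ∏ j : Fin k, hh τ (firstHalf x i) (secondHalf x j))
    / (vdTheta τ (firstHalf x) * vdTheta τ (secondHalf x))
    * Matrix.det (Matrix.of fun i j : Fin k => (hh τ (firstHalf x i) (secondHalf x j))⁻¹)

/-- The expression defining the elliptic Tsuchiya determinant is well defined:
the Vandermonde-type denominators and the entries `𝕙(x_i,x_{j+k})` are nonzero. -/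
def tsuDefined (τ : ℂ) (k : ℕ) (x : Fin (2 * k) → ℂ) : Prop :=
  (∀ i j : Fin k, i ≠ j →
    th1 (firstHalf x j - firstHalf x i) τ ≠ 0 ∧ th1 (firstHalf x j + firstHalf x i) τ ≠ 0) ∧
  (∀ i j : Fin k, i ≠ j →
    th1 (secondHalf x j - secondHalf x i) τ ≠ 0 ∧ th1 (secondHalf x j + secondHalf x i) τ ≠ 0) ∧
  (∀ i j : Fin k, hh τ (firstHalf x i) (secondHalf x j) ≠ 0)

/-- `h(w,w') = 1 − (3+ζ²)ww' + (1−ζ²)ww'(w+w')`. -/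
def hpol (ζ w w' : ℂ) : ℂ := 1 - (3 + ζ ^ 2) * w * w' + (1 - ζ ^ 2) * w * w' * (w + w')

/-- Vandermonde product `Δ(w₁,…,w_k) = ∏_{i<j}(w_j − w_i)`. -/
def vdm {k : ℕ} (y : Fin k → ℂ) : ℂ :=
  ∏ i : Fin k, ∏ j : Fin k, if i < j then y j - y i else 1

/-- The determinant-ratio expression defining the polynomial `H_{2k}`. -/
def Hratio (ζ : ℂ) (k : ℕ) (w : Fin (2 * k) → ℂ) : ℂ :=
  (∏ i : Fin k, ∏ j : Fin k, hpol ζ (firstHalf w i) (secondHalf w j))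
    / (vdm (firstHalf w) * vdm (secondHalf w))
    * Matrix.det (Matrix.of fun i j : Fin k => (hpol ζ (firstHalf w i) (secondHalf w j))⁻¹)

/-- The expression `Hratio` is well defined at `w`. -/
def HratioDefined (ζ : ℂ) (k : ℕ) (w : Fin (2 * k) → ℂ) : Prop :=
  (∀ i j : Fin k, i ≠ j → firstHalf w i ≠ firstHalf w j) ∧
  (∀ i j : Fin k, i ≠ j → secondHalf w i ≠ secondHalf w j) ∧
  (∀ i j : Fin k, hpol ζ (firstHalf w i) (secondHalf w j) ≠ 0)

/-- `H` is the family of Rosengren–Zinn-Justin polynomials `H_{2k}` for parameter `ζ`: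
for each `k`, `H k` is a polynomial function of the `2k` variables agreeing with the
determinant-ratio formula wherever the latter is defined, and `H 0 = 1`. -/
def IsHFamily (ζ : ℂ) (H : (k : ℕ) → (Fin (2 * k) → ℂ) → ℂ) : Prop :=
  (∀ w, H 0 w = 1) ∧
  (∀ k : ℕ, ∃ P : MvPolynomial (Fin (2 * k)) ℂ, ∀ w, H k w = MvPolynomial.eval w P) ∧
  (∀ (k : ℕ) (w : Fin (2 * k) → ℂ), HratioDefined ζ k w → H k w = Hratio ζ k w)

/-- Vertex weight `a(u)`. -/
def av (τ u : ℂ) : ℂ := th4 (2*ηc) (2*τ) * th1 (u + 2*ηc) (2*τ) * th4 u (2*τ)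
/-- Vertex weight `b(u)`. -/
def bv (τ u : ℂ) : ℂ := th4 (2*ηc) (2*τ) * th4 (u + 2*ηc) (2*τ) * th1 u (2*τ)
/-- Vertex weight `c(u)`. -/
def cv (τ u : ℂ) : ℂ := th1 (2*ηc) (2*τ) * th4 (u + 2*ηc) (2*τ) * th4 u (2*τ)
/-- Vertex weight `d(u)`. -/
def dv (τ u : ℂ) : ℂ := th1 (2*ηc) (2*τ) * th1 (u + 2*ηc) (2*τ) * th1 u (2*τ)
/-- `r(u) = a(u) + b(u)`. -/
def rv (τ u : ℂ) : ℂ := av τ u + bv τ u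

/-- Entries of the `R`-matrix of the eight-vertex model, in the basis `{↑↑,↑↓,↓↑,↓↓}`
identified with `Fin 2 × Fin 2` (`↑ = 0`, `↓ = 1`). -/
def Rent (τ u : ℂ) (p q : Fin 2 × Fin 2) : ℂ :=
  if p = q then (if p.1 = p.2 then av τ u else bv τ u)
  else if q = (p.2, p.1) then cv τ u
  else if p.1 = p.2 ∧ q.1 = q.2 then dv τ u
  else 0

/-- Entries of `Ř(u) = 𝒫 R(u)`. -/
def Rcheckent (τ u : ℂ) (p q : Fin 2 × Fin 2) : ℂ := Rent τ u (p.2, p.1) q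

/-- The boundary vector `χ(x) ∈ ℂ²⊗ℂ²`. -/
def chiV (τ lam x : ℂ) : Fin 2 × Fin 2 → ℂ := fun p =>
  if p = ((0 : Fin 2), (1 : Fin 2)) then th1 (x + lam) (2*τ) * th4 (x - lam - 2*ηc) (2*τ)
  else if p = ((1 : Fin 2), (0 : Fin 2)) then th1 (x - lam - 2*ηc) (2*τ) * th4 (x + lam) (2*τ)
  else 0

/-- The boundary vector `χ̄(x) ∈ ℂ²⊗ℂ²`. -/
def chibarV (τ lam x : ℂ) : Fin 2 × Fin 2 → ℂ := fun p =>
  if p = ((0 : Fin 2), (0 : Fin 2)) then th1 (x + lam) (2*τ) * th1 (x - lam - 2*ηc) (2*τ)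
  else if p = ((1 : Fin 2), (1 : Fin 2)) then th4 (x - lam - 2*ηc) (2*τ) * th4 (x + lam) (2*τ)
  else 0

/-- A family `Ψ_n(u₁,…,u_{2n+1}) ∈ (ℂ²)^{⊗(2n+1)}`, represented by its components
with respect to spin configurations `α : Fin (2n+1) → Fin 2` (`↑ = 0`, `↓ = 1`). -/
abbrev PsiFam := (n : ℕ) → (Fin (2 * n + 1) → ℂ) → (Fin (2 * n + 1) → Fin 2) → ℂ

/-- The action of `Ř(u)` on tensor factors `i`, `j` of `(ℂ²)^{⊗L}`. -/
def applyRc (τ u : ℂ) {L : ℕ} (i j : Fin L) (ψ : (Fin L → Fin 2) → ℂ) :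
    (Fin L → Fin 2) → ℂ := fun α =>
  ∑ s : Fin 2, ∑ t : Fin 2,
    Rcheckent τ u (α i, α j) (s, t) * ψ (Function.update (Function.update α i s) j t)

/-- Spin flip. -/
def flipS : Fin 2 → Fin 2 := fun s => if s = 0 then 1 else 0

/-- Components of the singlet `s = ↑↓ − ↓↑`. -/
def singletC : Fin 2 → Fin 2 → ℂ := fun s t =>
  if s = 0 ∧ t = 1 then 1 else if s = 1 ∧ t = 0 then -1 else 0

/-- Delete the entries at positions `i`, `i+1` from a tuple. -/
def delTwo {α : Type*} {n : ℕ} (i : ℕ) (u : Fin (2 * (n + 1) + 1) → α) : Fin (2 * n + 1) → α :=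
  fun j => if _h : (j : ℕ) < i then u ⟨j, by have := j.2; omega⟩
           else u ⟨(j : ℕ) + 2, by have := j.2; omega⟩

/-- The components of `Ψ_n` are entire functions of each `u_i`. -/
def PsiEntire (Ψ : PsiFam) : Prop :=
  ∀ (n : ℕ) (u : Fin (2*n+1) → ℂ) (i : Fin (2*n+1)) (α : Fin (2*n+1) → Fin 2),
    Differentiable ℂ fun z => Ψ n (Function.update u i z) α

/-- (P1): the exchange relations. -/
def PsiP1 (τ : ℂ) (Ψ : PsiFam) : Prop :=
  ∀ (n : ℕ) (u : Fin (2*n+1) → ℂ) (i j : Fin (2*n+1)), (j : ℕ) = (i : ℕ) + 1 →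
    applyRc τ (u j - u i) i j (Ψ n u)
      = fun α => rv τ (u j - u i) * Ψ n (fun l => u (Equiv.swap i j l)) α

/-- (P2): local spin flips. -/
def PsiP2 (τ : ℂ) (Ψ : PsiFam) : Prop :=
  ∀ (n : ℕ) (u : Fin (2*n+1) → ℂ) (i : Fin (2*n+1)) (α : Fin (2*n+1) → Fin 2),
    Ψ n u (Function.update α i (flipS (α i)))
      = (-(pnome τ)) ^ n * Complex.exp (-Complex.I * ∑ j, (u j - u i))
        * Ψ n (Function.update u i (u i + Real.pi * τ)) α

/-- (P3): quasi-periodicity of `Ψ_n` in each `u_i`. -/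
def PsiP3 (τ : ℂ) (Ψ : PsiFam) : Prop :=
  ∀ (n : ℕ) (u : Fin (2*n+1) → ℂ) (i : Fin (2*n+1)),
    (Ψ n (Function.update u i (u i + Real.pi))
      = fun α => (∏ j ∈ Finset.univ.erase i, (if α j = 0 then (1:ℂ) else -1)) * Ψ n u α) ∧
    (Ψ n (Function.update u i (u i + 2 * Real.pi * τ))
      = fun α => (pnome τ ^ (4*n))⁻¹ *
          Complex.exp (-2 * Complex.I * ∑ j, (u i - u j)) * Ψ n u α)

/-- (P4): the wheel condition. -/
def PsiP4 (Ψ : PsiFam) : Prop :=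
  ∀ (n : ℕ) (u : Fin (2*n+1) → ℂ),
    (∃ i j k : Fin (2*n+1), i < j ∧ j < k ∧ u j = u i + 2*ηc ∧ u k = u i + 4*ηc) →
    Ψ n u = 0

/-- (P5): the reduction relations. -/
def PsiP5 (τ : ℂ) (Ψ : PsiFam) : Prop :=
  ∀ (n : ℕ) (u : Fin (2*(n+1)+1) → ℂ) (i : ℕ) (hi : i + 1 < 2*(n+1)+1),
    u ⟨i+1, hi⟩ = u ⟨i, by omega⟩ + 2*ηc →
    Ψ (n+1) u = fun α =>
      (∏ j ∈ (Finset.univ.erase (⟨i, by omega⟩ : Fin (2*(n+1)+1))).erase ⟨i+1, hi⟩,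
          th1 (u ⟨i, by omega⟩ - u j - 2*ηc) τ)
        * singletC (α ⟨i, by omega⟩) (α ⟨i+1, hi⟩)
        * Ψ n (delTwo i u) (delTwo i α)

/-- (P6): `Ψ₀ = ↑ + ↓`. -/
def PsiP6 (Ψ : PsiFam) : Prop := ∀ u α, Ψ 0 u α = 1

/-- The inhomogeneity parameters `(x₁,−x₁,…,x_n,−x_n,0)`. -/
def interleave {n : ℕ} (x : Fin n → ℂ) : Fin (2*n+1) → ℂ := fun j =>
  if h : (j : ℕ) < 2*n then
    (if (j : ℕ) % 2 = 0 then x ⟨(j:ℕ)/2, by omega⟩ else -x ⟨(j:ℕ)/2, by omega⟩)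
  else 0

/-- Components of `χ(x)`. -/
def chiC (τ lam x : ℂ) (s t : Fin 2) : ℂ :=
  if s = 0 ∧ t = 1 then th1 (x + lam) (2*τ) * th4 (x - lam - 2*ηc) (2*τ)
  else if s = 1 ∧ t = 0 then th1 (x - lam - 2*ηc) (2*τ) * th4 (x + lam) (2*τ)
  else 0

/-- Components of `χ̄(x)`. -/
def chibarC (τ lam x : ℂ) (s t : Fin 2) : ℂ :=
  if s = 0 ∧ t = 0 then th1 (x + lam) (2*τ) * th1 (x - lam - 2*ηc) (2*τ)
  else if s = 1 ∧ t = 1 then th4 (x - lam - 2*ηc) (2*τ) * th4 (x + lam) (2*τ)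
  else 0

/-- The scalar product `Z_n(x₁,…,x_n) = ⟨ξ_n(x₁,…,x_n), Ψ_n(x₁,−x₁,…,x_n,−x_n,0)⟩`. -/
def Zfun (τ lam : ℂ) (Ψ : PsiFam) (n : ℕ) (x : Fin n → ℂ) : ℂ :=
  ∑ α : Fin (2*n+1) → Fin 2,
    (∏ m : Fin n, chiC τ lam (x m)
        (α ⟨2*(m:ℕ), by have := m.2; omega⟩) (α ⟨2*(m:ℕ)+1, by have := m.2; omega⟩))
      * (if α ⟨2*n, by omega⟩ = 0 then (1:ℂ) else 0)
      * Ψ n (interleave x) α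

/-- The scalar product `Z̄_n^±(x₁,…,x_n)`, with `ε = ±1`. -/
def Zbarfun (τ lam ε : ℂ) (Ψ : PsiFam) (n : ℕ) (x : Fin n → ℂ) : ℂ :=
  ∑ α : Fin (2*n+1) → Fin 2,
    (∏ m : Fin n, chibarC τ lam (x m)
        (α ⟨2*(m:ℕ), by have := m.2; omega⟩) (α ⟨2*(m:ℕ)+1, by have := m.2; omega⟩))
      * (if α ⟨2*n, by omega⟩ = 0 then (1:ℂ) else ε)
      * Ψ n (interleave x) α

/-- The normalisation constant `𝒩_n`. -/
def Ncoef (τ : ℂ) (n : ℕ) : ℂ :=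
  (-1 : ℂ) ^ ((n+1)/2) * (th1 ηc τ ^ (n^2))⁻¹ * (th4 0 (2*τ) / th4 ηc (2*τ)) ^ (n*(n+1)/2)

/-- The vector `ψ_n = 𝒩_n Ψ_n(0,…,0)`. -/
def psiH (τ : ℂ) (Ψ : PsiFam) (n : ℕ) (α : Fin (2*n+1) → Fin 2) : ℂ :=
  Ncoef τ n * Ψ n (fun _ => 0) α

/-- The scalar product `S_n(μ) = ((⟨↑↓| + μ⟨↓↑|)^{⊗n} ⊗ ⟨↑|) ψ_n`. -/
def Sfun (τ : ℂ) (Ψ : PsiFam) (n : ℕ) (μ : ℂ) : ℂ :=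
  ∑ α : Fin (2*n+1) → Fin 2,
    (∏ m : Fin n,
      (if α ⟨2*(m:ℕ), by have := m.2; omega⟩ = 0 ∧ α ⟨2*(m:ℕ)+1, by have := m.2; omega⟩ = 1
        then (1:ℂ)
       else if α ⟨2*(m:ℕ), by have := m.2; omega⟩ = 1 ∧ α ⟨2*(m:ℕ)+1, by have := m.2; omega⟩ = 0
        then μ
       else 0))
      * (if α ⟨2*n, by omega⟩ = 0 then (1:ℂ) else 0) * psiH τ Ψ n α

/-- The scalar product `S̄_n^±(ν) = ((⟨↑↑| + ν⟨↓↓|)^{⊗n} ⊗ (⟨↑| ± ⟨↓|)) ψ_n`, with `ε = ±1`. -/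
def Sbarfun (τ ε : ℂ) (Ψ : PsiFam) (n : ℕ) (ν : ℂ) : ℂ :=
  ∑ α : Fin (2*n+1) → Fin 2,
    (∏ m : Fin n,
      (if α ⟨2*(m:ℕ), by have := m.2; omega⟩ = 0 ∧ α ⟨2*(m:ℕ)+1, by have := m.2; omega⟩ = 0
        then (1:ℂ)
       else if α ⟨2*(m:ℕ), by have := m.2; omega⟩ = 1 ∧ α ⟨2*(m:ℕ)+1, by have := m.2; omega⟩ = 1
        then ν
       else 0))
      * (if α ⟨2*n, by omega⟩ = 0 then (1:ℂ) else ε) * psiH τ Ψ n α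

/-- The alternating spin configuration `↑↓↑↓⋯↑`. -/
def altConf {L : ℕ} : Fin L → Fin 2 := fun j => if (j : ℕ) % 2 = 0 then 0 else 1

/-- The fully polarised spin configuration `↓⋯↓`. -/
def downConf {L : ℕ} : Fin L → Fin 2 := fun _ => 1

/-- The spin configuration `↑⋯↑↓` with a single `↓` at the last site. -/
def lastDownConf {n : ℕ} : Fin (2*n+1) → Fin 2 := fun j => if (j : ℕ) = 2*n then 1 else 0

/-- `J₂ = −1/2`. -/
def J2c : ℂ := -(1/2)
/-- `J₃ = 1/(1+ζ)`. -/
def J3c (ζ : ℂ) : ℂ := 1/(1+ζ)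
/-- `J₄ = 1/(1−ζ)`. -/
def J4c (ζ : ℂ) : ℂ := 1/(1-ζ)
/-- `μ̄ = (μ−1)²/((ζ²−1)μ)`. -/
def mubar (ζ μ : ℂ) : ℂ := (μ - 1)^2 / ((ζ^2 - 1)*μ)
/-- `ν̄ = (ν−ζ)(νζ−1)/((ζ²−1)ν)`. -/
def nubar (ζ ν : ℂ) : ℂ := (ν - ζ)*(ν*ζ - 1) / ((ζ^2 - 1)*ν)

/-- The elliptic function `w(x)`. -/
def wfun (τ x : ℂ) : ℂ :=
  th4 ηc (2*τ) / th4 0 (2*τ) * th1 x τ ^ 2 / (th1 (x - ηc) τ * th1 (x + ηc) τ)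

/-- `β₂ = η + π/2`. -/
def β2c : ℂ := ηc + (Real.pi : ℂ)/2
/-- `β₃ = η + π/2 + πτ/2`. -/
def β3c (τ : ℂ) : ℂ := ηc + (Real.pi : ℂ)/2 + (Real.pi : ℂ)*τ/2
/-- `β₄ = η + πτ/2`. -/
def β4c (τ : ℂ) : ℂ := ηc + (Real.pi : ℂ)*τ/2

/-- `f` is an (even) theta function of degree `m`, nome `p = e^{iπτ}` and norm `0`
with respect to each of its variables. -/
def ThetaLike (τ : ℂ) (m : ℕ) {n : ℕ} (X : (Fin n → ℂ) → ℂ) : Prop :=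
  ∀ (x : Fin n → ℂ) (i : Fin n),
    Differentiable ℂ (fun z => X (Function.update x i z)) ∧
    (∀ z, X (Function.update x i (z + Real.pi)) = X (Function.update x i z)) ∧
    (∀ z, X (Function.update x i (z + Real.pi * τ))
        = ((-(pnome τ)) ^ m)⁻¹ * Complex.exp (-2 * Complex.I * ((m : ℂ) * z))
            * X (Function.update x i z)) ∧
    (∀ z, X (Function.update x i (-z)) = X (Function.update x i z))

/-- Sum of the theta series over the shifted lattice `2ℤ + 1/2`. -/
def thetaQuarter (s τ : ℂ) : ℂ :=
  ∑' m : ℤ, cexp ((Real.pi : ℂ) * I * τ * (2 * (m : ℂ) + 1/2) ^ 2 / 2 + (2 * (m : ℂ) + 1/2) * I * s)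

lemma summable_norm_cexp_quadratic {τ : ℂ} (hτ : 0 < τ.im) (b c : ℂ) :
    Summable fun n : ℤ => ‖cexp ((Real.pi : ℂ) * I * τ * (n : ℂ) ^ 2 + b * n + c)‖ := by
  have hs := ((summable_jacobiTheta₂_term_iff (b / (2 * Real.pi * I)) τ).2 hτ).norm.mul_right
    ‖cexp c‖
  refine hs.congr fun n => ?_
  rw [← norm_mul, jacobiTheta₂_term, ← Complex.exp_add]
  congr 2
  have : (Real.pi : ℂ) ≠ 0 := by exact_mod_cast Real.pi_ne_zero
  field_simp
  ring

lemma norm_neg_one_zpow_mul (n : ℤ) (z : ℂ) : ‖(-1 : ℂ) ^ n * z‖ = ‖z‖ := by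
  rw [norm_mul, norm_zpow]; simp

lemma summable_norm_th1_term {τ : ℂ} (hτ : 0 < τ.im) (z : ℂ) :
    Summable fun n : ℤ => ‖(-1 : ℂ) ^ n * cexp ((Real.pi : ℂ) * I * τ * ((n : ℂ) + 1/2) ^ 2
      + (2 * (n : ℂ) + 1) * I * z)‖ := by
  simp_rw [norm_neg_one_zpow_mul]
  convert summable_norm_cexp_quadratic hτ ((Real.pi : ℂ) * I * τ + 2 * I * z)
    ((Real.pi : ℂ) * I * τ / 4 + I * z) using 4
  ring

lemma summable_norm_th4_term {τ : ℂ} (hτ : 0 < τ.im) (z : ℂ) :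
    Summable fun n : ℤ => ‖(-1 : ℂ) ^ n * cexp ((Real.pi : ℂ) * I * τ * (n : ℂ) ^ 2
      + 2 * (n : ℂ) * I * z)‖ := by
  simp_rw [norm_neg_one_zpow_mul]
  convert summable_norm_cexp_quadratic hτ (2 * I * z) 0 using 4
  ring

lemma summable_norm_thetaQuarter_term {τ : ℂ} (hτ : 0 < τ.im) (s : ℂ) :
    Summable fun m : ℤ => ‖cexp ((Real.pi : ℂ) * I * τ * (2 * (m : ℂ) + 1/2) ^ 2 / 2
      + (2 * (m : ℂ) + 1/2) * I * s)‖ := by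
  have h2 : 0 < (2 * τ).im := by simpa using hτ
  convert summable_norm_cexp_quadratic h2 ((Real.pi : ℂ) * I * τ + 2 * I * s)
    ((Real.pi : ℂ) * I * τ / 8 + I * s / 2) using 4
  ring

/-- The pairs of integers with even sum and those with odd sum, each parametrised by pairs
of integers. -/
def parityEquiv : (ℤ × ℤ) ⊕ (ℤ × ℤ) ≃ ℤ × ℤ where
  toFun := Sum.elim (fun p => (p.1 - p.2, p.1 + p.2)) (fun p => (p.2 - p.1, -p.1 - p.2 - 1))
  invFun q := if (q.1 + q.2) % 2 = 0 then Sum.inl ((q.1 + q.2) / 2, (q.2 - q.1) / 2)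
    else Sum.inr ((-q.1 - q.2 - 1) / 2, (q.1 - q.2 - 1) / 2)
  left_inv p := by
    rcases p with ⟨a, b⟩ | ⟨a, b⟩
    · refine (if_pos (by simp only [Sum.elim_inl]; omega)).trans ?_
      simp only [Sum.elim_inl, Sum.inl.injEq, Prod.mk.injEq]; omega
    · refine (if_neg (by simp only [Sum.elim_inr]; omega)).trans ?_
      simp only [Sum.elim_inr, Sum.inr.injEq, Prod.mk.injEq]; omega
  right_inv q := by
    rcases q with ⟨a, b⟩
    dsimp only
    split_ifs with h
    · simp only [Sum.elim_inl, Prod.mk.injEq]; omega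
    · simp only [Sum.elim_inr, Prod.mk.injEq]; omega

/-- A product `ϑ₄ ϑ₁` is a two-by-two determinant in the values of `thetaQuarter`. -/
lemma th4_mul_th1 {τ : ℂ} (hτ : 0 < τ.im) (x y : ℂ) :
    th4 x τ * th1 y τ = -I * (thetaQuarter (x + y) τ * thetaQuarter (-(x - y)) τ
      - thetaQuarter (-(x + y)) τ * thetaQuarter (x - y) τ) := by
  have hF := fun s => summable_norm_thetaQuarter_term hτ s
  have h4 := summable_norm_th4_term hτ x
  have h1 := summable_norm_th1_term hτ y
  have hprod : ∀ s t, HasSum (fun p : ℤ × ℤ => _) (thetaQuarter s τ * thetaQuarter t τ) :=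
    fun s t => by
      have := (summable_mul_of_summable_norm (hF s) (hF t)).hasSum
      rwa [← tsum_mul_tsum_of_summable_norm (hF s) (hF t)] at this
  have hsum : HasSum (fun q : ℤ × ℤ => ((-1 : ℂ) ^ q.1 * cexp ((Real.pi : ℂ) * I * τ *
      (q.1 : ℂ) ^ 2 + 2 * (q.1 : ℂ) * I * x)) * ((-1 : ℂ) ^ q.2 * cexp ((Real.pi : ℂ) * I * τ *
      ((q.2 : ℂ) + 1/2) ^ 2 + (2 * (q.2 : ℂ) + 1) * I * y)))
      (thetaQuarter (x + y) τ * thetaQuarter (-(x - y)) τ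
        + -(thetaQuarter (-(x + y)) τ * thetaQuarter (x - y) τ)) := by
    rw [← parityEquiv.hasSum_iff]
    refine HasSum.sum ?_ ?_
    · convert hprod (x + y) (-(x - y)) using 1
      ext ⟨j, l⟩
      have he : Even (j - l + (j + l)) := ⟨j, by ring⟩
      simp only [Function.comp_apply, parityEquiv, Equiv.coe_fn_mk, Sum.elim_inl]
      rw [mul_mul_mul_comm, ← zpow_add₀ (by norm_num), he.neg_one_zpow, one_mul,
        ← Complex.exp_add, ← Complex.exp_add]
      congr 1
      push_cast
      ring
    · convert! (hprod (-(x + y)) (x - y)).neg using 1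
      funext ⟨j, l⟩
      have ho : Odd (l - j + (-j - l - 1)) := ⟨-j - 1, by ring⟩
      simp only [Function.comp_apply, parityEquiv, Equiv.coe_fn_mk, Sum.elim_inr]
      rw [mul_mul_mul_comm, ← zpow_add₀ (by norm_num), ho.neg_one_zpow, neg_one_mul,
        ← Complex.exp_add, ← Complex.exp_add]
      congr 2
      push_cast
      ring
  rw [th4, th1, mul_left_comm, tsum_mul_tsum_of_summable_norm h4 h1, hsum.tsum_eq]
  ring

lemma th1_neg (z τ : ℂ) : th1 (-z) τ = -th1 z τ := by
  rw [th1, th1, ← mul_neg, ← tsum_neg, ← (Equiv.subLeft (-1 : ℤ)).tsum_eq]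
  congr 2
  ext n
  have ho : (-1 : ℂ) ^ (-1 - n) = -(-1) ^ n := by
    rw [zpow_sub₀ (by norm_num), zpow_neg_one, div_eq_mul_inv, ← inv_zpow]
    norm_num
  rw [Equiv.subLeft_apply, ho, neg_mul]
  congr 3
  push_cast
  ring

lemma th4_neg (z τ : ℂ) : th4 (-z) τ = th4 z τ := by
  rw [th4, th4, ← (Equiv.neg ℤ).tsum_eq]
  congr 1
  ext n
  rw [Equiv.neg_apply, ← inv_zpow', inv_neg, inv_one]
  congr 2
  push_cast
  ring

lemma th1_add_pi (z τ : ℂ) : th1 (z + Real.pi) τ = -th1 z τ := by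
  rw [th1, th1, ← mul_neg, ← tsum_neg]
  congr 2
  ext n
  rw [show (Real.pi : ℂ) * I * τ * ((n : ℂ) + 1/2) ^ 2 + (2 * (n : ℂ) + 1) * I * (z + Real.pi)
      = (Real.pi : ℂ) * I * τ * ((n : ℂ) + 1/2) ^ 2 + (2 * (n : ℂ) + 1) * I * z
        + (Real.pi * I + n * (2 * Real.pi * I)) by ring, Complex.exp_add, Complex.exp_add (_ * I),
    Complex.exp_pi_mul_I, Complex.exp_int_mul_two_pi_mul_I]
  ring

lemma th4_add_pi (z τ : ℂ) : th4 (z + Real.pi) τ = th4 z τ := by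
  rw [th4, th4]
  congr 1
  ext n
  rw [← mul_one (cexp (_ + 2 * (n : ℂ) * I * z)), ← Complex.exp_int_mul_two_pi_mul_I n,
    ← Complex.exp_add]
  congr 2
  ring

lemma thetaQuarter_add_two_pi (s τ : ℂ) :
    thetaQuarter (s + 2 * Real.pi) τ = -thetaQuarter s τ := by
  rw [thetaQuarter, thetaQuarter, ← tsum_neg]
  congr 1
  ext m
  rw [show (Real.pi : ℂ) * I * τ * (2 * (m : ℂ) + 1/2) ^ 2 / 2
        + (2 * (m : ℂ) + 1/2) * I * (s + 2 * Real.pi)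
      = (Real.pi : ℂ) * I * τ * (2 * (m : ℂ) + 1/2) ^ 2 / 2 + (2 * (m : ℂ) + 1/2) * I * s
        + (Real.pi * I + (2 * m : ℤ) * (2 * Real.pi * I)) by push_cast; ring,
    Complex.exp_add, Complex.exp_add (_ * I), Complex.exp_pi_mul_I,
    Complex.exp_int_mul_two_pi_mul_I]
  ring

lemma th1_add_half_period (z τ : ℂ) :
    th1 (z + Real.pi * τ / 2) τ = I * cexp (-(Real.pi * I * τ / 4) - I * z) * th4 z τ := by
  rw [th1, th4, mul_assoc I, neg_mul, ← mul_neg, ← tsum_mul_left, ← tsum_neg]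
  conv_rhs => rw [← (Equiv.addRight (1 : ℤ)).tsum_eq]
  congr 2
  ext n
  rw [Equiv.coe_addRight, zpow_add₀ (by norm_num), zpow_one, mul_left_comm, ← Complex.exp_add,
    mul_neg_one, neg_mul]
  congr 3
  push_cast
  ring

lemma th4_add_half_period (z τ : ℂ) :
    th4 (z + Real.pi * τ / 2) τ = I * cexp (-(Real.pi * I * τ / 4) - I * z) * th1 z τ := by
  rw [th1, th4, mul_mul_mul_comm, mul_neg, I_mul_I, neg_neg, one_mul, ← tsum_mul_left]
  congr 1
  ext n
  rw [mul_left_comm, ← Complex.exp_add]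
  congr 2
  ring

lemma th1_sub_half_period (z τ : ℂ) :
    th1 (z - Real.pi * τ / 2) τ = -I * cexp (-(Real.pi * I * τ / 4) + I * z) * th4 z τ := by
  rw [← neg_neg (z - _), th1_neg, neg_sub, sub_eq_neg_add, th1_add_half_period, th4_neg, mul_neg,
    sub_neg_eq_add]
  ring

lemma th4_sub_half_period (z τ : ℂ) :
    th4 (z - Real.pi * τ / 2) τ = -I * cexp (-(Real.pi * I * τ / 4) + I * z) * th1 z τ := by
  rw [← neg_neg (z - _), th4_neg, neg_sub, sub_eq_neg_add, th4_add_half_period, th1_neg, mul_neg I,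
    sub_neg_eq_add]
  ring

lemma differentiable_th4 {τ : ℂ} (hτ : 0 < τ.im) : Differentiable ℂ fun z => th4 z τ := by
  have hpi : (Real.pi : ℂ) ≠ 0 := by exact_mod_cast Real.pi_ne_zero
  have heq : (fun z => th4 z τ) = fun z => jacobiTheta₂ (z / Real.pi + 1 / 2) τ := by
    ext z
    rw [th4, jacobiTheta₂]
    congr 1
    ext n
    rw [jacobiTheta₂_term, ← Complex.exp_pi_mul_I, ← Complex.exp_int_mul, ← Complex.exp_add]
    congr 1
    field_simp
    ring
  rw [heq]
  intro z
  exact (differentiableAt_jacobiTheta₂_fst (z / Real.pi + 1 / 2) hτ).comp z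
    (f := fun z : ℂ => z / Real.pi + 1 / 2) (by fun_prop)

lemma differentiable_th1 {τ : ℂ} (hτ : 0 < τ.im) : Differentiable ℂ fun z => th1 z τ := by
  have heq : (fun z => th1 z τ) = fun z =>
      I * cexp (-(Real.pi * I * τ / 4) - I * (z - Real.pi * τ / 2))
        * th4 (z - Real.pi * τ / 2) τ := by
    ext z
    rw [← th1_add_half_period, sub_add_cancel]
  rw [heq]
  have h4 : Differentiable ℂ fun z => th4 (z - Real.pi * τ / 2) τ :=
    (differentiable_th4 hτ).comp (f := fun z : ℂ => z - Real.pi * τ / 2) (by fun_prop)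
  fun_prop

/-- The sum of `w ^ N` over the cube roots of unity `w`, with the half-integer phase occurring in
`thetaQuarter`. -/
lemma one_sub_cexp_sub_cexp (N : ℤ) :
    1 - cexp ((2 * (N : ℂ) - 3/2) * I * (2 * ηc)) - cexp ((2 * (N : ℂ) - 3/2) * I * (-(2 * ηc)))
      = if (3 : ℤ) ∣ N then 3 else 0 := by
  set w := cexp ((N : ℂ) * (4 * Real.pi * I / 3)) with hw
  have hpos : cexp ((2 * (N : ℂ) - 3/2) * I * (2 * ηc)) = -w := by
    rw [hw, ← mul_neg_one, ← Complex.exp_neg_pi_mul_I, ← Complex.exp_add, ηc]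
    congr 1
    ring
  have hneg : cexp ((2 * (N : ℂ) - 3/2) * I * (-(2 * ηc))) = -w⁻¹ := by
    rw [mul_neg, Complex.exp_neg, hpos, inv_neg]
  have hw0 : w ≠ 0 := Complex.exp_ne_zero _
  have hcube : w ^ 3 = 1 := by
    rw [hw, ← Complex.exp_nat_mul, ← Complex.exp_int_mul_two_pi_mul_I (2 * N)]
    congr 1
    push_cast
    ring
  have hone : w = 1 ↔ (3 : ℤ) ∣ N := by
    have hpi : (2 * Real.pi * I : ℂ) ≠ 0 := Complex.two_pi_I_ne_zero
    rw [hw, Complex.exp_eq_one_iff]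
    constructor
    · rintro ⟨k, hk⟩
      have h2 : (2 * N : ℂ) = 3 * k := by
        apply mul_right_cancel₀ hpi
        linear_combination 3 * hk
      have h3 : 2 * N = 3 * k := by exact_mod_cast h2
      omega
    · rintro ⟨k, rfl⟩
      exact ⟨2 * k, by push_cast; ring⟩
  rw [hpos, hneg]
  split_ifs with h
  · rw [hone.2 h]; norm_num
  · have h1 : w - 1 ≠ 0 := sub_ne_zero.2 (mt hone.1 h)
    have hq : w ^ 2 + w + 1 = 0 := by
      apply mul_left_cancel₀ h1
      linear_combination hcube
    field_simp
    linear_combination hq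

/-- Pairs of integers `(n, m)` with `3 ∣ n + m + 1`. -/
def latticeThird (p : ℤ × ℤ) : ℤ × ℤ := (3 * p.1 - 1 - p.2, p.2)

lemma latticeThird_injective : Function.Injective latticeThird := by
  rintro ⟨a, b⟩ ⟨c, d⟩ h
  simp only [latticeThird, Prod.mk.injEq] at h ⊢
  omega

/-- An involution of the lattice preserving the quadratic form and changing the sign. -/
def latticeReflection : ℤ × ℤ ≃ ℤ × ℤ where
  toFun p := (p.1, 2 * p.1 - 1 - p.2)
  invFun p := (p.1, 2 * p.1 - 1 - p.2)
  left_inv p := by ext <;> simp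
  right_inv p := by ext <;> simp

lemma th4_mul_thetaQuarter {τ : ℂ} (hτ : 0 < τ.im) (s : ℂ) :
    HasSum (fun q : ℤ × ℤ => (-1 : ℂ) ^ q.1 * cexp ((Real.pi : ℂ) * I * τ *
      ((q.1 : ℂ) ^ 2 + (2 * (q.2 : ℂ) + 1/2) ^ 2 / 2)) *
      cexp ((2 * ((q.1 + q.2 + 1 : ℤ) : ℂ) - 3/2) * I * s)) (th4 s τ * thetaQuarter s τ) := by
  have h4 := summable_norm_th4_term hτ s
  have hF := summable_norm_thetaQuarter_term hτ s
  have := (summable_mul_of_summable_norm h4 hF).hasSum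
  rw [← tsum_mul_tsum_of_summable_norm h4 hF] at this
  convert! this using 1
  funext q
  rw [mul_assoc, mul_assoc (_ ^ _), ← Complex.exp_add, ← Complex.exp_add]
  congr 2
  push_cast
  ring

/-- The relation special to the crossing parameter `η = π/3`. -/
lemma th4_zero_mul_thetaQuarter {τ : ℂ} (hτ : 0 < τ.im) :
    th4 0 τ * thetaQuarter 0 τ
      = th4 (2 * ηc) τ * (thetaQuarter (2 * ηc) τ + thetaQuarter (-(2 * ηc)) τ) := by
  set T : ℤ × ℤ → ℂ := fun q => (-1 : ℂ) ^ q.1 * cexp ((Real.pi : ℂ) * I * τ *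
      ((q.1 : ℂ) ^ 2 + (2 * (q.2 : ℂ) + 1/2) ^ 2 / 2)) with hT
  have hsum := ((th4_mul_thetaQuarter hτ 0).sub (th4_mul_thetaQuarter hτ (2 * ηc))).sub
    (th4_mul_thetaQuarter hτ (-(2 * ηc)))
  have hterm : ∀ q : ℤ × ℤ, T q * cexp ((2 * ((q.1 + q.2 + 1 : ℤ) : ℂ) - 3/2) * I * 0)
      - T q * cexp ((2 * ((q.1 + q.2 + 1 : ℤ) : ℂ) - 3/2) * I * (2 * ηc))
      - T q * cexp ((2 * ((q.1 + q.2 + 1 : ℤ) : ℂ) - 3/2) * I * (-(2 * ηc)))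
      = T q * if (3 : ℤ) ∣ q.1 + q.2 + 1 then 3 else 0 := fun q => by
    rw [← one_sub_cexp_sub_cexp, mul_zero, Complex.exp_zero]
    ring
  have htsum : ∑' q : ℤ × ℤ, T q * (if (3 : ℤ) ∣ q.1 + q.2 + 1 then 3 else 0)
      = ∑' p, T (latticeThird p) * 3 := by
    rw [← latticeThird_injective.tsum_eq]
    · refine tsum_congr fun p => ?_
      rw [if_pos ⟨p.1, by simp only [latticeThird]; ring⟩]
    · rintro ⟨n, m⟩ hq
      have hd : (3 : ℤ) ∣ n + m + 1 := by
        by_contra hd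
        exact hq (by simp [hd])
      obtain ⟨t, ht⟩ := hd
      exact ⟨(t, m), Prod.ext (by simp only [latticeThird]; omega) rfl⟩
  have hodd : ∑' p, T (latticeThird p) * 3 = -∑' p, T (latticeThird p) * 3 := by
    rw [← tsum_neg]
    conv_lhs => rw [← latticeReflection.tsum_eq]
    refine tsum_congr fun p => ?_
    obtain ⟨t, m⟩ := p
    have hsign : (-1 : ℂ) ^ (t + m) = -(-1) ^ (3 * t - 1 - m) := by
      rw [show t + m = 3 * t - 1 - m + (2 * (m - t) + 1) by ring, zpow_add₀ (by norm_num),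
        Odd.neg_one_zpow ⟨m - t, rfl⟩, mul_neg_one]
    simp only [hT, latticeThird, latticeReflection, Equiv.coe_fn_mk]
    rw [show 3 * t - 1 - (2 * t - 1 - m) = t + m by ring, hsign, neg_mul, neg_mul]
    congr 4
    push_cast
    ring
  have hzero : ∑' p, T (latticeThird p) * 3 = 0 := by linear_combination hodd / 2
  have h := hsum.tsum_eq
  rw [tsum_congr hterm, htsum, hzero, th4_neg] at h
  linear_combination -h

/-- The Plücker relation satisfied by the determinants of `th4_mul_th1`. -/
lemma th_plucker {τ : ℂ} (hτ : 0 < τ.im) (a b c d : ℂ) :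
    th4 ((a + b) / 2) τ * th1 ((a - b) / 2) τ * (th4 ((c + d) / 2) τ * th1 ((c - d) / 2) τ)
      - th4 ((a + c) / 2) τ * th1 ((a - c) / 2) τ * (th4 ((b + d) / 2) τ * th1 ((b - d) / 2) τ)
      + th4 ((a + d) / 2) τ * th1 ((a - d) / 2) τ * (th4 ((b + c) / 2) τ * th1 ((b - c) / 2) τ)
      = 0 := by
  have key : ∀ s t : ℂ, th4 ((s + t) / 2) τ * th1 ((s - t) / 2) τ
      = -I * (thetaQuarter s τ * thetaQuarter (-t) τ - thetaQuarter (-s) τ * thetaQuarter t τ) :=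
    fun s t => by
      rw [th4_mul_th1 hτ, show (s + t) / 2 + (s - t) / 2 = s by ring,
        show (s + t) / 2 - (s - t) / 2 = t by ring]
  simp only [key]
  ring

lemma th_three_term {τ : ℂ} (hτ : 0 < τ.im) (x w l : ℂ) :
    th4 w τ * th1 (2 * x) τ * (th1 (x + l + w) τ * th4 (x - l) τ)
      - th1 w τ * th4 (2 * x) τ * (th1 (x - l) τ * th4 (x + l + w) τ)
      = th4 0 τ * th1 (2 * x + w) τ * (th1 (x + l) τ * th4 (x - l - w) τ) := by
  have h := th_plucker hτ (2 * x + w) (-(2 * x + w)) (2 * x - w) (-(2 * l + w))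
  rw [show (2 * x + w + -(2 * x + w)) / 2 = 0 by ring,
    show (2 * x + w - -(2 * x + w)) / 2 = 2 * x + w by ring,
    show (2 * x - w + -(2 * l + w)) / 2 = x - l - w by ring,
    show (2 * x - w - -(2 * l + w)) / 2 = x + l by ring,
    show (2 * x + w + (2 * x - w)) / 2 = 2 * x by ring,
    show (2 * x + w - (2 * x - w)) / 2 = w by ring,
    show (-(2 * x + w) + -(2 * l + w)) / 2 = -(x + l + w) by ring,
    show (-(2 * x + w) - -(2 * l + w)) / 2 = -(x - l) by ring,
    show (2 * x + w + -(2 * l + w)) / 2 = x - l by ring,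
    show (2 * x + w - -(2 * l + w)) / 2 = x + l + w by ring,
    show (-(2 * x + w) + (2 * x - w)) / 2 = -w by ring,
    show (-(2 * x + w) - (2 * x - w)) / 2 = -(2 * x) by ring] at h
  simp only [th1_neg, th4_neg] at h
  linear_combination -h

lemma th_three_term_bar {τ : ℂ} (hτ : 0 < τ.im) (y w l : ℂ) :
    th4 w τ * th4 (2 * y) τ * (th1 (y + l) τ * th1 (y - l - w) τ)
      + th1 w τ * th1 (2 * y) τ * (th4 (y - l - w) τ * th4 (y + l) τ)
      = th4 0 τ * th4 (w - 2 * y) τ * (th1 (y - l) τ * th1 (y + l + w) τ) := by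
  have h := th_plucker hτ (y + l + w) (-(y + l + w)) (w - y - l) (w - 3 * y + l)
  rw [show (y + l + w + -(y + l + w)) / 2 = 0 by ring,
    show (y + l + w - -(y + l + w)) / 2 = y + l + w by ring,
    show (w - y - l + (w - 3 * y + l)) / 2 = w - 2 * y by ring,
    show (w - y - l - (w - 3 * y + l)) / 2 = y - l by ring,
    show (y + l + w + (w - y - l)) / 2 = w by ring,
    show (y + l + w - (w - y - l)) / 2 = y + l by ring,
    show (-(y + l + w) + (w - 3 * y + l)) / 2 = -(2 * y) by ring,
    show (-(y + l + w) - (w - 3 * y + l)) / 2 = y - l - w by ring,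
    show (y + l + w + (w - 3 * y + l)) / 2 = -(y - l - w) by ring,
    show (y + l + w - (w - 3 * y + l)) / 2 = 2 * y by ring,
    show (-(y + l + w) + (w - y - l)) / 2 = -(y + l) by ring,
    show (-(y + l + w) - (w - y - l)) / 2 = -w by ring] at h
  simp only [th1_neg, th4_neg] at h
  linear_combination -h

lemma th_three_term_bar_shifted {τ : ℂ} (hτ : 0 < τ.im) (y w l : ℂ) :
    th4 w τ * th4 (2 * y) τ * (th4 (y - l - w) τ * th4 (y + l) τ)
      + th1 w τ * th1 (2 * y) τ * (th1 (y + l) τ * th1 (y - l - w) τ)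
      = th4 0 τ * th4 (w - 2 * y) τ * (th4 (y + l + w) τ * th4 (y - l) τ) := by
  have h := th_three_term_bar hτ y w (l + Real.pi * τ / 2)
  rw [← add_assoc y l, ← sub_sub y l, sub_right_comm _ _ w, add_right_comm _ _ w] at h
  simp only [th1_add_half_period, th4_add_half_period, th1_sub_half_period,
    th4_sub_half_period] at h
  have hexp : cexp (-(Real.pi * I * τ / 4) - I * (y + l + w))
        * cexp (-(Real.pi * I * τ / 4) + I * (y - l))
      = cexp (-(Real.pi * I * τ / 4) - I * (y + l))
        * cexp (-(Real.pi * I * τ / 4) + I * (y - l - w)) := by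
    rw [← Complex.exp_add, ← Complex.exp_add]
    congr 1
    ring
  apply mul_left_cancel₀ (mul_ne_zero (Complex.exp_ne_zero (-(Real.pi * I * τ / 4) - I * (y + l)))
    (Complex.exp_ne_zero (-(Real.pi * I * τ / 4) + I * (y - l - w))))
  linear_combination (norm := (ring_nf; simp only [I_sq]; ring_nf))
    h + th4 0 τ * th4 (w - 2 * y) τ * (th4 (y + l + w) τ * th4 (y - l) τ) * hexp

lemma rv_eq {τ : ℂ} (hτ : 0 < τ.im) (u : ℂ) :
    rv τ u = th4 0 (2 * τ) * th1 (2 * ηc - u) (2 * τ) * th4 (2 * ηc - u) (2 * τ) := by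
  have h2 : 0 < (2 * τ).im := by simpa using hτ
  have hq (s : ℂ) : thetaQuarter (s + 6 * ηc) (2 * τ) = -thetaQuarter s (2 * τ) := by
    rw [← thetaQuarter_add_two_pi, ηc]
    ring_nf
  have e1 := th4_mul_th1 h2 u (u + 2 * ηc)
  have e2 := th4_mul_th1 h2 (u + 2 * ηc) u
  have e3 := th4_mul_th1 h2 (2 * ηc - u) (2 * ηc - u)
  have hc := th4_zero_mul_thetaQuarter h2
  have q1 := hq (-(2 * u + 2 * ηc))
  have q2 := hq (2 * u - 4 * ηc)
  rw [show u + (u + 2 * ηc) = 2 * u + 2 * ηc by ring,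
    show u - (u + 2 * ηc) = -(2 * ηc) by ring, neg_neg] at e1
  rw [show u + 2 * ηc + u = 2 * u + 2 * ηc by ring,
    show u + 2 * ηc - u = 2 * ηc by ring] at e2
  rw [show 2 * ηc - u + (2 * ηc - u) = -(2 * u + 2 * ηc) + 6 * ηc by ring, q1, sub_self, neg_zero,
    show -(-(2 * u + 2 * ηc) + 6 * ηc) = 2 * u - 4 * ηc by ring] at e3
  rw [show 2 * u - 4 * ηc + 6 * ηc = 2 * u + 2 * ηc by ring] at q2
  rw [rv, av, bv]
  linear_combination th4 (2 * ηc) (2 * τ) * (e1 + e2) - th4 0 (2 * τ) * e3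
    - I * (thetaQuarter (-(2 * u + 2 * ηc)) (2 * τ) - thetaQuarter (2 * u + 2 * ηc) (2 * τ)) * hc
    - I * th4 0 (2 * τ) * thetaQuarter 0 (2 * τ) * q2

lemma exists_th4_ne_zero {τ : ℂ} (hτ : 0 < τ.im) : ∃ z, th4 z τ ≠ 0 := by
  by_contra! hzero
  let f : ℤ → C(ℝ, ℂ) := fun n =>
    ⟨fun x => (-1 : ℂ) ^ n * cexp ((Real.pi : ℂ) * I * τ * (n : ℂ) ^ 2 + 2 * (n : ℂ) * I * x),
      by fun_prop⟩
  have hsum := intervalIntegral.hasSum_intervalIntegral_of_summable_norm (a := 0) (b := Real.pi)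
    (f := f) (by
      refine Summable.of_nonneg_of_le (fun _ => norm_nonneg _) (fun n => ?_)
        (summable_norm_th4_term hτ 0)
      refine (ContinuousMap.norm_le _ (norm_nonneg _)).2 fun x => ?_
      simp [f, Complex.norm_exp])
  have hint : ∀ n : ℤ, n ≠ 0 → ∫ x in (0 : ℝ)..Real.pi, f n x = 0 := fun n hn => by
    have hc : 2 * (n : ℂ) * I ≠ 0 := by simp [hn]
    simp only [f, ContinuousMap.coe_mk, Complex.exp_add, intervalIntegral.integral_const_mul]
    rw [integral_exp_mul_complex hc, show 2 * (n : ℂ) * I * Real.pi = n * (2 * Real.pi * I) by ring,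
      Complex.exp_int_mul_two_pi_mul_I]
    simp
  have hone : ∫ x in (0 : ℝ)..Real.pi, f 0 x = Real.pi := by simp [f]
  have htot : (∫ x in (0 : ℝ)..Real.pi, ∑' n : ℤ, f n x) = 0 := by
    have : (fun x : ℝ => ∑' n : ℤ, f n x) = fun _ => 0 := funext fun x => hzero x
    rw [this, intervalIntegral.integral_zero]
  have := hsum.unique (hone ▸ hasSum_single 0 hint)
  rw [htot] at this
  exact Real.pi_ne_zero (by exact_mod_cast this.symm)

lemma exists_th1_ne_zero {τ : ℂ} (hτ : 0 < τ.im) : ∃ z, th1 z τ ≠ 0 := by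
  obtain ⟨z, hz⟩ := exists_th4_ne_zero hτ
  refine ⟨z + Real.pi * τ / 2, ?_⟩
  rw [th1_add_half_period]
  exact mul_ne_zero (mul_ne_zero I_ne_zero (Complex.exp_ne_zero _)) hz

/-- The entire functions form an integral domain. -/
lemma Differentiable.forall_eq_zero_or_of_mul_eq_zero {f g : ℂ → ℂ} (hf : Differentiable ℂ f)
    (hg : Differentiable ℂ g) (h : ∀ z, f z * g z = 0) : (∀ z, f z = 0) ∨ ∀ z, g z = 0 := by
  have := AnalyticOnNhd.eq_zero_or_eq_zero_of_mul_eq_zero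
    (fun z _ => hf.analyticAt z) (fun z _ => hg.analyticAt z) (fun z _ => h z)
    (isPreconnected_univ (α := ℂ))
  simpa using this

lemma th4_zero_ne_zero {τ : ℂ} (hτ : 0 < τ.im) : th4 0 τ ≠ 0 := by
  intro h0
  obtain ⟨w, hw⟩ := exists_th1_ne_zero hτ
  obtain ⟨v, hv⟩ := exists_th4_ne_zero hτ
  have h4 := differentiable_th4 hτ
  have h1 := differentiable_th1 hτ
  have hsq (z : ℂ) : (th1 w τ * th4 z τ - th4 w τ * th1 z τ)
      * (th1 w τ * th4 z τ + th4 w τ * th1 z τ) = 0 := by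
    have h := th_three_term hτ (z / 2) w (z / 2 - w)
    rw [h0, show 2 * (z / 2) = z by ring, show z / 2 + (z / 2 - w) + w = z by ring,
      show z / 2 - (z / 2 - w) = w by ring] at h
    linear_combination -h
  refine mul_ne_zero hw hv ?_
  have hpi := th1_add_pi v τ
  have hpi' := th4_add_pi v τ
  rcases Differentiable.forall_eq_zero_or_of_mul_eq_zero
    (f := fun z => th1 w τ * th4 z τ - th4 w τ * th1 z τ)
    (g := fun z => th1 w τ * th4 z τ + th4 w τ * th1 z τ) (by fun_prop) (by fun_prop) hsq
    with h | h
  all_goals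
    have ha := h v
    have hb := h (v + Real.pi)
    simp only [hpi, hpi'] at ha hb
    linear_combination (ha + hb) / 2

lemma differentiable_rv {τ : ℂ} (hτ : 0 < τ.im) : Differentiable ℂ (rv τ) := by
  have h2 : 0 < (2 * τ).im := by simpa using hτ
  have h1 := differentiable_th1 h2
  have h4 := differentiable_th4 h2
  have h1' : Differentiable ℂ fun u => th1 (2 * ηc - u) (2 * τ) :=
    h1.comp (f := fun u => 2 * ηc - u) (by fun_prop)
  have h4' : Differentiable ℂ fun u => th4 (2 * ηc - u) (2 * τ) :=
    h4.comp (f := fun u => 2 * ηc - u) (by fun_prop)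
  rw [funext (rv_eq hτ)]
  fun_prop

lemma exists_rv_ne_zero {τ : ℂ} (hτ : 0 < τ.im) : ∃ u, rv τ u ≠ 0 := by
  have h2 : 0 < (2 * τ).im := by simpa using hτ
  by_contra! hzero
  rcases Differentiable.forall_eq_zero_or_of_mul_eq_zero (differentiable_th1 h2)
    (differentiable_th4 h2) (fun z => by
      have h := hzero (2 * ηc - z)
      rw [rv_eq hτ, sub_sub_cancel, mul_assoc] at h
      exact (mul_eq_zero.1 h).resolve_left (th4_zero_ne_zero h2)) with h | h
  · obtain ⟨z, hz⟩ := exists_th1_ne_zero h2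
    exact hz (h z)
  · obtain ⟨z, hz⟩ := exists_th4_ne_zero h2
    exact hz (h z)

/-- The reflection property of a two-site boundary vector `K`: `Ř(u) K(u/2)` is proportional to
`K(-u/2)`, with ratio expressed through `E`. -/
def IsReflected (τ : ℂ) (E : ℂ → ℂ) (K : ℂ → Fin 2 → Fin 2 → ℂ) : Prop :=
  ∀ (y : ℂ) (s' t' : Fin 2),
    E (2 * ηc - 2 * y) * ∑ s, ∑ t, K y s t * Rcheckent τ (2 * y) (s, t) (s', t')
      = rv τ (2 * y) * E (2 * ηc + 2 * y) * K (-y) s' t'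

lemma isReflected_chiC {τ : ℂ} (hτ : 0 < τ.im) (lam : ℂ) :
    IsReflected τ (fun z => th4 z (2 * τ)) (chiC τ lam) := by
  have h2 : 0 < (2 * τ).im := by simpa using hτ
  intro y s' t'
  have e1 := th_three_term h2 (-y) (2 * ηc) lam
  have e2 := th_three_term h2 (-y) (2 * ηc) (-lam - 2 * ηc)
  rw [show -y + lam + 2 * ηc = -(y - lam - 2 * ηc) by ring,
    show -y - lam - 2 * ηc = -(y + lam + 2 * ηc) by ring, show -y - lam = -(y + lam) by ring,
    show 2 * -y + 2 * ηc = 2 * ηc - 2 * y by ring, mul_neg] at e1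
  rw [show -y + (-lam - 2 * ηc) + 2 * ηc = -(y + lam) by ring,
    show -y - (-lam - 2 * ηc) - 2 * ηc = -y + lam by ring,
    show -y - (-lam - 2 * ηc) = -(y - lam - 2 * ηc) by ring,
    show -y + (-lam - 2 * ηc) = -(y + lam + 2 * ηc) by ring,
    show 2 * -y + 2 * ηc = 2 * ηc - 2 * y by ring, mul_neg] at e2
  simp only [th1_neg, th4_neg] at e1 e2
  fin_cases s' <;> fin_cases t' <;>
    simp [chiC, Rcheckent, Rent, Fin.sum_univ_two, rv_eq hτ, cv, bv]
  all_goals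
    rw [show -y - lam - 2 * ηc = -(y + lam + 2 * ηc) by ring, add_comm (2 * y)]
    simp only [th1_neg, th4_neg]
  · linear_combination th4 (2 * ηc - 2 * y) (2 * τ) * th4 (2 * ηc + 2 * y) (2 * τ) * e1
  · linear_combination th4 (2 * ηc - 2 * y) (2 * τ) * th4 (2 * ηc + 2 * y) (2 * τ) * e2

lemma isReflected_chibarC {τ : ℂ} (hτ : 0 < τ.im) (lam : ℂ) :
    IsReflected τ (fun z => th1 z (2 * τ)) (chibarC τ lam) := by
  have h2 : 0 < (2 * τ).im := by simpa using hτ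
  intro y s' t'
  have e1 := th_three_term_bar h2 y (2 * ηc) lam
  have e2 := th_three_term_bar_shifted h2 y (2 * ηc) lam
  fin_cases s' <;> fin_cases t' <;>
    simp [chibarC, Rcheckent, Rent, Fin.sum_univ_two, rv_eq hτ, av, dv]
  all_goals
    rw [show -y - lam - 2 * ηc = -(y + lam + 2 * ηc) by ring, show -y + lam = -(y - lam) by ring,
      add_comm (2 * y)]
    simp only [th1_neg, th4_neg]
  · linear_combination th1 (2 * ηc - 2 * y) (2 * τ) * th1 (2 * ηc + 2 * y) (2 * τ) * e1
  · linear_combination th1 (2 * ηc - 2 * y) (2 * τ) * th1 (2 * ηc + 2 * y) (2 * τ) * e2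

/-- Exchange the spins at sites `i`, `j` with a given pair of spins. -/
def exchangeSpins {L : ℕ} (i j : Fin L) (q : (Fin L → Fin 2) × Fin 2 × Fin 2) :
    (Fin L → Fin 2) × Fin 2 × Fin 2 :=
  (Function.update (Function.update q.1 i q.2.1) j q.2.2, q.1 i, q.1 j)

lemma exchangeSpins_involutive {L : ℕ} {i j : Fin L} (hij : i ≠ j) :
    Function.Involutive (exchangeSpins i j) := by
  rintro ⟨α, s, t⟩
  simp only [exchangeSpins, Function.update_self, Function.update_of_ne hij]
  refine Prod.ext ?_ rfl
  funext k
  by_cases hj : k = j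
  · subst hj; simp
  · by_cases hi : k = i
    · subst hi; simp [hj]
    · simp [hi, hj]

/-- Moving the action of `Ř` from a vector to a covector factorised on the two sites. -/
lemma sum_mul_applyRc {L : ℕ} {i j : Fin L} (hij : i ≠ j) (τ u : ℂ) (k : Fin 2 → Fin 2 → ℂ)
    {Q : (Fin L → Fin 2) → ℂ}
    (hQ : ∀ α s t, Q (Function.update (Function.update α i s) j t) = Q α)
    (ψ : (Fin L → Fin 2) → ℂ) :
    ∑ α, k (α i) (α j) * Q α * applyRc τ u i j ψ α
      = ∑ α, (∑ s, ∑ t, k s t * Rcheckent τ u (s, t) (α i, α j)) * Q α * ψ α := by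
  simp only [applyRc, Finset.mul_sum, Finset.sum_mul, ← Fintype.sum_prod_type']
  rw [← Equiv.sum_comp (exchangeSpins_involutive hij).toPerm]
  refine Finset.sum_congr rfl fun q _ => ?_
  have hself := congrArg Prod.fst (exchangeSpins_involutive hij q)
  simp only [exchangeSpins] at hself
  simp only [Function.Involutive.coe_toPerm, exchangeSpins, Function.update_self,
    Function.update_of_ne hij, hQ] at hself ⊢
  rw [hself]
  ring

lemma IsReflected.sum_eq {τ : ℂ} (hτ : 0 < τ.im) {E : ℂ → ℂ} {K : ℂ → Fin 2 → Fin 2 → ℂ}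
    (hK : IsReflected τ E K) (hE : Differentiable ℂ E)
    (hKd : ∀ s t, Differentiable ℂ fun y => K y s t) {Ψ : PsiFam} (hent : PsiEntire Ψ)
    (h1 : PsiP1 τ Ψ) {n : ℕ} (U : Fin (2*n+1) → ℂ) {i j : Fin (2*n+1)}
    (hij : (j : ℕ) = (i : ℕ) + 1) {Q : (Fin (2*n+1) → Fin 2) → ℂ}
    (hQ : ∀ α s t, Q (Function.update (Function.update α i s) j t) = Q α) :
    E (2 * ηc - (U j - U i))
        * ∑ α, K ((U j - U i) / 2) (α i) (α j) * Q α * Ψ n (fun l => U (Equiv.swap i j l)) α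
      = E (2 * ηc + (U j - U i)) * ∑ α, K (-((U j - U i) / 2)) (α i) (α j) * Q α * Ψ n U α := by
  have hne : i ≠ j := by rintro rfl; omega
  have hexch (V : Fin (2*n+1) → ℂ) : rv τ (V j - V i) * (E (2 * ηc - (V j - V i))
        * ∑ α, K ((V j - V i) / 2) (α i) (α j) * Q α * Ψ n (fun l => V (Equiv.swap i j l)) α
      - E (2 * ηc + (V j - V i)) * ∑ α, K (-((V j - V i) / 2)) (α i) (α j) * Q α * Ψ n V α)
      = 0 := by
    have hsum := sum_mul_applyRc hne τ (V j - V i) (K ((V j - V i) / 2)) hQ (Ψ n V)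
    rw [h1 n V i j hij] at hsum
    have href : ∀ s t, _ := hK ((V j - V i) / 2)
    rw [mul_div_cancel₀ _ (two_ne_zero' ℂ)] at href
    rw [mul_sub, sub_eq_zero, mul_left_comm, Finset.mul_sum]
    calc _ = E (2 * ηc - (V j - V i)) * ∑ α, (∑ s, ∑ t, K ((V j - V i) / 2) s t
            * Rcheckent τ (V j - V i) (s, t) (α i, α j)) * Q α * Ψ n V α := by
          rw [← hsum]
          congr 1
          exact Finset.sum_congr rfl fun α _ => by ring
      _ = _ := by
          rw [← mul_assoc, Finset.mul_sum, Finset.mul_sum]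
          refine Finset.sum_congr rfl fun α _ => ?_
          linear_combination Q α * Ψ n V α * href (α i) (α j)
  have hswap (z : ℂ) : (fun l => Function.update U j z (Equiv.swap i j l))
      = Function.update (fun l => U (Equiv.swap i j l)) i z := by
    funext l
    rcases eq_or_ne l i with rfl | hl
    · simp
    · have : Equiv.swap i j l ≠ j := by
        rw [Ne, Equiv.swap_apply_eq_iff, Equiv.swap_apply_right]
        exact hl
      simp [hl, this]
  have hzero := Differentiable.forall_eq_zero_or_of_mul_eq_zero
    (f := fun z => rv τ (z - U i))
    (g := fun z => E (2 * ηc - (z - U i)) * ∑ α, K ((z - U i) / 2) (α i) (α j) * Q α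
        * Ψ n (Function.update (fun l => U (Equiv.swap i j l)) i z) α
      - E (2 * ηc + (z - U i)) * ∑ α, K (-((z - U i) / 2)) (α i) (α j) * Q α
        * Ψ n (Function.update U j z) α)
    ((differentiable_rv hτ).comp (f := fun z => z - U i) (by fun_prop))
    (by
      have hd1 := fun α => hent n (fun l => U (Equiv.swap i j l)) i α
      have hd2 := fun α => hent n U j α
      have hk1 (s t) : Differentiable ℂ fun z => K ((z - U i) / 2) s t :=
        (hKd s t).comp (f := fun z => (z - U i) / 2) (by fun_prop)
      have hk2 (s t) : Differentiable ℂ fun z => K (-((z - U i) / 2)) s t :=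
        (hKd s t).comp (f := fun z => -((z - U i) / 2)) (by fun_prop)
      exact ((hE.comp (f := fun z => 2 * ηc - (z - U i)) (by fun_prop)).mul
        (Differentiable.fun_sum fun α _ => ((hk1 _ _).mul_const _).mul (hd1 α))).sub
        ((hE.comp (f := fun z => 2 * ηc + (z - U i)) (by fun_prop)).mul
          (Differentiable.fun_sum fun α _ => ((hk2 _ _).mul_const _).mul (hd2 α))))
    (fun z => by
      have h := hexch (Function.update U j z)
      rwa [hswap, Function.update_self, Function.update_of_ne hne] at h)
  rcases hzero with h | h
  · obtain ⟨u, hu⟩ := exists_rv_ne_zero hτ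
    exact absurd (by simpa using h (u + U i)) hu
  · have hUj := h (U j)
    rw [← hswap, Function.update_eq_self] at hUj
    exact sub_eq_zero.1 hUj

/-- The pairing of `Ψ_n(x₁,−x₁,…,x_n,−x_n,0)` with a covector factorised into two-site vectors
`K(x_m)` and a last one-site vector `g`. -/
def boundaryPairing (K : ℂ → Fin 2 → Fin 2 → ℂ) (g : Fin 2 → ℂ) (Ψ : PsiFam) (n : ℕ)
    (x : Fin n → ℂ) : ℂ :=
  ∑ α : Fin (2*n+1) → Fin 2,
    (∏ m : Fin n, K (x m)
        (α ⟨2*(m:ℕ), by have := m.2; omega⟩) (α ⟨2*(m:ℕ)+1, by have := m.2; omega⟩))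
      * g (α ⟨2*n, by omega⟩) * Ψ n (interleave x) α

lemma interleave_update_neg {n : ℕ} (x : Fin n → ℂ) (i : Fin n) {a b : Fin (2*n+1)}
    (ha : (a : ℕ) = 2 * i) (hb : (b : ℕ) = 2 * i + 1) :
    interleave (Function.update x i (-(x i))) = fun l => interleave x (Equiv.swap a b l) := by
  have hi := i.2
  have hdiv : (2 * (i : ℕ) + 1) / 2 = i := by omega
  have hlt : 2 * (i : ℕ) + 1 < 2 * n := by omega
  funext l
  rcases eq_or_ne l a with rfl | hla
  · simp [interleave, ha, hb, hdiv, hlt]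
  rcases eq_or_ne l b with rfl | hlb
  · simp [interleave, ha, hb, hdiv, hlt]
  have hli : (l : ℕ) / 2 ≠ i := by
    rw [Ne, Fin.ext_iff] at hla hlb
    omega
  have hne (h : (l : ℕ) / 2 < n) : (⟨(l : ℕ) / 2, h⟩ : Fin n) ≠ i :=
    fun he => hli (congrArg Fin.val he)
  simp only [interleave, Equiv.swap_apply_of_ne_of_ne hla hlb, Function.update_of_ne (hne _)]

lemma IsReflected.boundaryPairing_neg {τ : ℂ} (hτ : 0 < τ.im) {E : ℂ → ℂ}
    {K : ℂ → Fin 2 → Fin 2 → ℂ} (hK : IsReflected τ E K) (hE : Differentiable ℂ E)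
    (hKd : ∀ s t, Differentiable ℂ fun y => K y s t) {Ψ : PsiFam} (hent : PsiEntire Ψ)
    (h1 : PsiP1 τ Ψ) (g : Fin 2 → ℂ) {n : ℕ} (x : Fin n → ℂ) (i : Fin n) :
    E (2 * (ηc + x i)) * boundaryPairing K g Ψ n (Function.update x i (-(x i)))
      = E (2 * (ηc - x i)) * boundaryPairing K g Ψ n x := by
  have hi := i.2
  set a : Fin (2*n+1) := ⟨2 * i, by omega⟩ with ha
  set b : Fin (2*n+1) := ⟨2 * i + 1, by omega⟩ with hb
  let Q : (Fin (2*n+1) → Fin 2) → ℂ := fun α =>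
    (∏ m ∈ Finset.univ.erase i, K (x m)
        (α ⟨2*(m:ℕ), by have := m.2; omega⟩) (α ⟨2*(m:ℕ)+1, by have := m.2; omega⟩))
      * g (α ⟨2*n, by omega⟩)
  have hQ : ∀ α s t, Q (Function.update (Function.update α a s) b t) = Q α := fun α s t => by
    have hoff (l : Fin (2*n+1)) (hl : (l : ℕ) / 2 ≠ i) :
        Function.update (Function.update α a s) b t l = α l := by
      rw [Function.update_of_ne, Function.update_of_ne]
      all_goals
        rintro rfl
        simp only [ha, hb] at hl
        omega
    simp only [Q]
    congr 1
    · refine Finset.prod_congr rfl fun m hm => ?_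
      have hmi : (m : ℕ) ≠ i := fun h => Finset.ne_of_mem_erase hm (Fin.ext h)
      rw [hoff _ (by simp only; omega), hoff _ (by simp only; omega)]
    · rw [hoff _ (by simp only; omega)]
  have hsplit (v : ℂ) : boundaryPairing K g Ψ n (Function.update x i v)
      = ∑ α, K v (α a) (α b) * Q α * Ψ n (interleave (Function.update x i v)) α := by
    refine Finset.sum_congr rfl fun α _ => ?_
    rw [← Finset.mul_prod_erase _ _ (Finset.mem_univ i), Function.update_self, mul_assoc (K _ _ _)]
    congr 3
    refine Finset.prod_congr rfl fun m hm => ?_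
    rw [Function.update_of_ne (Finset.ne_of_mem_erase hm)]
  have hUa : interleave x a = x i := by
    simp [interleave, ha]
  have hUb : interleave x b = -(x i) := by
    have h1 : 2 * (i : ℕ) + 1 < 2 * n := by omega
    have h2 : (2 * (i : ℕ) + 1) / 2 = i := by omega
    simp [interleave, hb, h1, h2]
  have h := hK.sum_eq hτ hE hKd hent h1 (interleave x) (i := a) (j := b) rfl hQ
  rw [hUa, hUb, ← interleave_update_neg x i rfl rfl, show (-(x i) - x i) / 2 = -(x i) by ring,
    neg_neg, show 2 * ηc - (-(x i) - x i) = 2 * (ηc + x i) by ring,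
    show 2 * ηc + (-(x i) - x i) = 2 * (ηc - x i) by ring, ← hsplit] at h
  have hx := hsplit (x i)
  rw [Function.update_eq_self] at hx
  rw [h, hx]

lemma differentiable_chiC {τ : ℂ} (hτ : 0 < τ.im) (lam : ℂ) (s t : Fin 2) :
    Differentiable ℂ fun y => chiC τ lam y s t := by
  have h2 : 0 < (2 * τ).im := by simpa using hτ
  have hadd : Differentiable ℂ fun y : ℂ => y + lam := by fun_prop
  have hsub : Differentiable ℂ fun y : ℂ => y - lam - 2 * ηc := by fun_prop
  unfold chiC
  split_ifs
  · exact ((differentiable_th1 h2).comp hadd).mul ((differentiable_th4 h2).comp hsub)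
  · exact ((differentiable_th1 h2).comp hsub).mul ((differentiable_th4 h2).comp hadd)
  · exact differentiable_const 0

lemma differentiable_chibarC {τ : ℂ} (hτ : 0 < τ.im) (lam : ℂ) (s t : Fin 2) :
    Differentiable ℂ fun y => chibarC τ lam y s t := by
  have h2 : 0 < (2 * τ).im := by simpa using hτ
  have hadd : Differentiable ℂ fun y : ℂ => y + lam := by fun_prop
  have hsub : Differentiable ℂ fun y : ℂ => y - lam - 2 * ηc := by fun_prop
  unfold chibarC
  split_ifs
  · exact ((differentiable_th1 h2).comp hadd).mul ((differentiable_th1 h2).comp hsub)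
  · exact ((differentiable_th4 h2).comp hsub).mul ((differentiable_th4 h2).comp hadd)
  · exact differentiable_const 0

theorem stmt10 (τ lam : ℂ) (hτ : 0 < τ.im) (Ψ : PsiFam)
    (hent : PsiEntire Ψ) (h1 : PsiP1 τ Ψ)
    (n : ℕ) (hn : 1 ≤ n) (x : Fin n → ℂ) (i : Fin n) :
    th4 (2*(ηc + x i)) (2*τ) * Zfun τ lam Ψ n (Function.update x i (-(x i)))
      = th4 (2*(ηc - x i)) (2*τ) * Zfun τ lam Ψ n x ∧
    th1 (2*(ηc + x i)) (2*τ) * Zbarfun τ lam 1 Ψ n (Function.update x i (-(x i)))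
      = th1 (2*(ηc - x i)) (2*τ) * Zbarfun τ lam 1 Ψ n x ∧
    th1 (2*(ηc + x i)) (2*τ) * Zbarfun τ lam (-1) Ψ n (Function.update x i (-(x i)))
      = th1 (2*(ηc - x i)) (2*τ) * Zbarfun τ lam (-1) Ψ n x := by
  have h2 : 0 < (2 * τ).im := by simpa using hτ
  have hbar (ε : ℂ) := (isReflected_chibarC hτ lam).boundaryPairing_neg hτ (differentiable_th1 h2)
    (differentiable_chibarC hτ lam) hent h1 (fun s => if s = 0 then 1 else ε) x i
  exact ⟨(isReflected_chiC hτ lam).boundaryPairing_neg hτ (differentiable_th4 h2)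
    (differentiable_chiC hτ lam) hent h1 (fun s => if s = 0 then 1 else 0) x i, hbar 1, hbar (-1)⟩

end
end

section
/- Assume the family Ψ_n satisfies properties (P1), (P3), (P4). Then for each n ≥ 1 and each i = 1,…,n: Z_n(…, x_i = −β₁, …) = Z_n(…, x_i = β₁, …) = 0, Z_n(…, x_i = −β₃, …) = Z_n(…, x_i = −β₄, …) = 0, and Z̄_n^±(…, x_i = −β₁, …) = Z̄_n^±(…, x_i = −β₂, …) = 0, where β₁ = η, β₂ = η + π/2, β₃ = η + π/2 + πτ/2, β₄ = η + πτ/2. -/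
noncomputable section

open Complex
open scoped BigOperators

lemma jacobiTheta₂_term_add_half (n : ℤ) (z τ : ℂ) :
    jacobiTheta₂_term n (z + 1 / 2) τ = (-1) ^ n * jacobiTheta₂_term n z τ := by
  have h : (-1 : ℂ) ^ n = cexp (n * (Real.pi * I)) := by
    rw [Complex.exp_int_mul, Complex.exp_pi_mul_I]
  rw [h, jacobiTheta₂_term, jacobiTheta₂_term, ← Complex.exp_add]
  congr 1
  ring

lemma th4_eq_jacobiTheta₂ (z τ : ℂ) : th4 z τ = jacobiTheta₂ (z / Real.pi + 1 / 2) τ := by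
  have hπ : (Real.pi : ℂ) ≠ 0 := by exact_mod_cast Real.pi_ne_zero
  refine tsum_congr fun n => ?_
  rw [jacobiTheta₂_term_add_half, jacobiTheta₂_term]
  congr 2
  field_simp
  ring

lemma th1_eq_jacobiTheta₂ (z τ : ℂ) :
    th1 z τ = -I * cexp (Real.pi * I * τ / 4 + I * z) *
      jacobiTheta₂ (z / Real.pi + τ / 2 + 1 / 2) τ := by
  have hπ : (Real.pi : ℂ) ≠ 0 := by exact_mod_cast Real.pi_ne_zero
  rw [th1, mul_assoc (-I)]
  congr 1
  rw [jacobiTheta₂, ← tsum_mul_left]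
  refine tsum_congr fun n => ?_
  rw [jacobiTheta₂_term_add_half, jacobiTheta₂_term, mul_left_comm, ← Complex.exp_add]
  congr 2
  field_simp
  ring

lemma tsum_eq_tsum_add_swap_div_two {F : ℤ × ℤ → ℂ} (hF : Summable F) :
    ∑' x, F x = ∑' x : ℤ × ℤ, (F x + F x.swap) / 2 := by
  have hF' : Summable fun x : ℤ × ℤ => F x.swap := (Equiv.prodComm ℤ ℤ).summable_iff.mpr hF
  have h : ∑' x : ℤ × ℤ, F x.swap = ∑' x, F x := (Equiv.prodComm ℤ ℤ).tsum_eq F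
  rw [tsum_div_const, hF.tsum_add hF', h]
  ring

/-- The duplication formula `ϑ₃(z|τ) ϑ₄(z|τ) = ϑ₄(2z|2τ) ϑ₄(0|2τ)`. -/
lemma jacobiTheta₂_mul_jacobiTheta₂_add_half (z : ℂ) {τ : ℂ} (hτ : 0 < τ.im) :
    jacobiTheta₂ z τ * jacobiTheta₂ (z + 1 / 2) τ =
      jacobiTheta₂ (2 * z + 1 / 2) (2 * τ) * jacobiTheta₂ (1 / 2) (2 * τ) := by
  have hτ2 : 0 < (2 * τ).im := by simpa using hτ
  have hs (w : ℂ) := ((summable_jacobiTheta₂_term_iff w τ).mpr hτ).norm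
  have hs2 (w : ℂ) := ((summable_jacobiTheta₂_term_iff w (2 * τ)).mpr hτ2).norm
  simp only [jacobiTheta₂]
  rw [tsum_mul_tsum_of_summable_norm (hs _) (hs _),
    tsum_mul_tsum_of_summable_norm (hs2 _) (hs2 _)]
  set F : ℤ × ℤ → ℂ := fun x => jacobiTheta₂_term x.1 z τ * jacobiTheta₂_term x.2 (z + 1 / 2) τ
    with hF
  have hsF : Summable F := summable_mul_of_summable_norm (f := fun n => jacobiTheta₂_term n z τ)
    (g := fun n => jacobiTheta₂_term n (z + 1 / 2) τ) (hs _) (hs _)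
  have hFval (m n : ℤ) : F (m, n) =
      (-1) ^ n * (jacobiTheta₂_term m z τ * jacobiTheta₂_term n z τ) := by
    simp only [hF, jacobiTheta₂_term_add_half]
    ring
  have hsym := tsum_eq_tsum_add_swap_div_two hsF
  have hinj : Function.Injective fun x : ℤ × ℤ => (x.1 + x.2, x.1 - x.2) := by
    rintro ⟨a, b⟩ ⟨c, d⟩ h
    simp only [Prod.mk.injEq] at h ⊢
    omega
  rw [hsym, ← hinj.tsum_eq]
  · refine tsum_congr fun x => ?_
    obtain ⟨a, b⟩ := x
    have hpar : ((-1 : ℂ)) ^ (a + b) = (-1) ^ (a - b) := by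
      rw [show a + b = (a - b) + 2 * b by ring, zpow_add₀ (by norm_num), zpow_mul]
      simp
    have hpar' : ((-1 : ℂ)) ^ (a - b) = (-1) ^ a * (-1) ^ b := by
      rw [← hpar, zpow_add₀ (by norm_num)]
    have h0 : jacobiTheta₂_term b (1 / 2) (2 * τ) = (-1) ^ b * jacobiTheta₂_term b 0 (2 * τ) := by
      rw [← jacobiTheta₂_term_add_half, zero_add]
    have hE : jacobiTheta₂_term (a + b) z τ * jacobiTheta₂_term (a - b) z τ =
        jacobiTheta₂_term a (2 * z) (2 * τ) * jacobiTheta₂_term b 0 (2 * τ) := by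
      simp only [jacobiTheta₂_term, ← Complex.exp_add]
      congr 1
      push_cast
      ring
    simp only [Prod.swap_prod_mk, hFval, h0, jacobiTheta₂_term_add_half, hpar, hpar']
    rw [mul_comm (jacobiTheta₂_term (a - b) z τ), hE]
    ring
  · rintro ⟨m, n⟩ hx
    rcases Int.even_or_odd (m + n) with ⟨k, hk⟩ | ⟨k, hk⟩
    · exact ⟨(k, m - k), by simp only [Prod.mk.injEq]; omega⟩
    · refine absurd ?_ hx
      have hpar : ((-1 : ℂ)) ^ m = -(-1) ^ n := by
        rw [show m = -n + (2 * k + 1) by omega, zpow_add₀ (by norm_num), zpow_add₀ (by norm_num),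
          zpow_mul, zpow_neg, ← inv_zpow]
        norm_num
      simp only [Prod.swap_prod_mk, hFval, hpar]
      ring

lemma tendsto_tsum_mul_exp_pow_two {τ : ℂ} (hτ : 0 < τ.im) (c : ℤ → ℂ) (e : ℤ → ℕ)
    (hs : Summable fun n => ‖c n * cexp (Real.pi * I * e n * τ)‖) :
    Filter.Tendsto (fun k : ℕ => ∑' n, c n * cexp (Real.pi * I * e n * (2 ^ k * τ)))
      Filter.atTop (nhds (∑' n, if e n = 0 then c n else 0)) := by
  have hnorm (k : ℕ) (n : ℤ) : ‖cexp (Real.pi * I * e n * (2 ^ k * τ))‖ =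
      Real.exp (-(Real.pi * e n * τ.im) * 2 ^ k) := by
    rw [Complex.norm_exp, show (Real.pi * I * e n * (2 ^ k * τ) : ℂ) =
      ((Real.pi * e n * 2 ^ k : ℝ) : ℂ) * τ * I by push_cast; ring, mul_I_re, im_ofReal_mul]
    congr 1
    ring
  refine tendsto_tsum_of_dominated_convergence hs (fun n => ?_)
    (Filter.Eventually.of_forall fun k n => ?_)
  · by_cases h : e n = 0
    · simp [h]
    · rw [if_neg h, tendsto_zero_iff_norm_tendsto_zero]
      simp only [norm_mul, hnorm]
      rw [← mul_zero ‖c n‖]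
      refine Filter.Tendsto.const_mul _ (Real.tendsto_exp_atBot.comp ?_)
      have hpos : 0 < Real.pi * e n * τ.im := by
        have : (0 : ℝ) < e n := by exact_mod_cast Nat.pos_of_ne_zero h
        have := Real.pi_pos
        positivity
      exact (tendsto_pow_atTop_atTop_of_one_lt one_lt_two).const_mul_atTop_of_neg
        (neg_neg_of_pos hpos)
  · have h0 := hnorm 0 n
    rw [pow_zero, one_mul, pow_zero, mul_one] at h0
    rw [norm_mul, norm_mul, hnorm, h0]
    gcongr
    have hpos : 0 ≤ Real.pi * e n * τ.im := by
      have := Real.pi_pos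
      positivity
    have h2 : (1 : ℝ) ≤ 2 ^ k := one_le_pow₀ one_le_two
    nlinarith

lemma two_pow_mul_im_pos {τ : ℂ} (hτ : 0 < τ.im) (k : ℕ) : 0 < (2 ^ k * τ).im := by
  rw [show (2 ^ k * τ : ℂ) = ((2 ^ k : ℝ) : ℂ) * τ by push_cast; ring, im_ofReal_mul]
  positivity

lemma exists_jacobiTheta₂_two_pow_ne_zero (s : ℝ) {τ : ℂ} (hτ : 0 < τ.im) :
    ∃ k : ℕ, jacobiTheta₂ s (2 ^ k * τ) ≠ 0 := by
  have key (k : ℕ) (n : ℤ) : jacobiTheta₂_term n s (2 ^ k * τ) =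
      cexp (2 * Real.pi * I * n * s) *
        cexp (Real.pi * I * ((n ^ 2).toNat : ℕ) * (2 ^ k * τ)) := by
    have : (((n ^ 2).toNat : ℕ) : ℂ) = n ^ 2 := by
      have h := Int.toNat_of_nonneg (sq_nonneg n)
      exact_mod_cast congrArg (Int.cast : ℤ → ℂ) h
    rw [this, jacobiTheta₂_term, ← Complex.exp_add]
  have hs := ((summable_jacobiTheta₂_term_iff s τ).mpr hτ).norm
  have key0 (n : ℤ) := key 0 n
  simp only [pow_zero, one_mul] at key0
  simp only [key0] at hs
  have hlim := tendsto_tsum_mul_exp_pow_two hτ _ _ hs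
  rw [tsum_eq_single 0] at hlim
  · simp only [← key] at hlim
    exact (hlim.eventually_ne (by simp)).exists
  · intro n hn
    rw [if_neg]
    have : 0 < n ^ 2 := by positivity
    omega

lemma exists_jacobiTheta₂_add_half_period_two_pow_ne_zero (s : ℝ)
    (hsne : cexp (2 * Real.pi * I * s) ≠ -1) {τ : ℂ} (hτ : 0 < τ.im) :
    ∃ k : ℕ, jacobiTheta₂ (s + 2 ^ k * τ / 2) (2 ^ k * τ) ≠ 0 := by
  have key (k : ℕ) (n : ℤ) : jacobiTheta₂_term n (s + 2 ^ k * τ / 2) (2 ^ k * τ) =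
      cexp (2 * Real.pi * I * n * s) *
        cexp (Real.pi * I * ((n ^ 2 + n).toNat : ℕ) * (2 ^ k * τ)) := by
    have : (((n ^ 2 + n).toNat : ℕ) : ℂ) = n ^ 2 + n := by
      have h := Int.toNat_of_nonneg (show 0 ≤ n ^ 2 + n by
        rcases le_or_gt 0 n with h | h <;> nlinarith)
      exact_mod_cast congrArg (Int.cast : ℤ → ℂ) h
    rw [this, jacobiTheta₂_term, ← Complex.exp_add]
    congr 1
    ring
  have hs := ((summable_jacobiTheta₂_term_iff (s + τ / 2) τ).mpr hτ).norm
  have key0 (n : ℤ) := key 0 n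
  simp only [pow_zero, one_mul] at key0
  simp only [key0] at hs
  have hlim := tendsto_tsum_mul_exp_pow_two hτ _ _ hs
  rw [tsum_eq_sum (s := {0, -1})] at hlim
  · simp only [← key] at hlim
    refine (hlim.eventually_ne ?_).exists
    rw [Finset.sum_pair (by norm_num)]
    simp only [Int.cast_zero, mul_zero, zero_mul, Complex.exp_zero, Int.cast_neg, Int.cast_one,
      mul_neg, neg_mul, mul_one, Complex.exp_neg]
    norm_num
    intro h
    apply hsne
    have h' := congrArg (fun w => w * cexp (2 * Real.pi * I * s)) h
    simp only [add_mul, inv_mul_cancel₀ (Complex.exp_ne_zero _), zero_mul, one_mul] at h'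
    linear_combination h'
  · intro n hn
    rw [if_neg]
    simp only [Finset.mem_insert, Finset.mem_singleton, not_or] at hn
    have : 0 < n ^ 2 + n := by
      rcases lt_or_gt_of_ne hn.1 with h | h
      · have : n ≤ -2 := by omega
        nlinarith
      · nlinarith
    omega

lemma jacobiTheta₂_half_ne_zero {τ : ℂ} (hτ : 0 < τ.im) : jacobiTheta₂ (1 / 2) τ ≠ 0 := by
  intro h0
  obtain ⟨k, hk⟩ := exists_jacobiTheta₂_two_pow_ne_zero (1 / 2) hτ
  push_cast at hk
  refine hk ?_
  clear hk
  induction k with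
  | zero => simpa using h0
  | succ k ih =>
    have h := jacobiTheta₂_mul_jacobiTheta₂_add_half 0 (two_pow_mul_im_pos hτ k)
    rw [zero_add, ih, mul_zero, mul_zero, zero_add, ← mul_assoc, ← pow_succ'] at h
    exact mul_self_eq_zero.mp h.symm

lemma jacobiTheta₂_duplication_eq_zero {z τ : ℂ} (hτ : 0 < τ.im)
    (h : jacobiTheta₂ (z + 1 / 2) τ = 0) : jacobiTheta₂ (2 * z + 1 / 2) (2 * τ) = 0 := by
  have hd := jacobiTheta₂_mul_jacobiTheta₂_add_half z hτ
  rw [h, mul_zero] at hd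
  exact (mul_eq_zero.mp hd.symm).resolve_right
    (jacobiTheta₂_half_ne_zero (by simpa using hτ))

lemma jacobiTheta₂_two_thirds_add_half_ne_zero {τ : ℂ} (hτ : 0 < τ.im) :
    jacobiTheta₂ (2 / 3 + 1 / 2) τ ≠ 0 := by
  intro h0
  obtain ⟨k, hk⟩ := exists_jacobiTheta₂_two_pow_ne_zero (2 / 3 + 1 / 2) hτ
  push_cast at hk
  refine hk ?_
  clear hk
  induction k with
  | zero => simpa using h0
  | succ k ih =>
    have h := jacobiTheta₂_duplication_eq_zero (two_pow_mul_im_pos hτ k) ih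
    rw [← mul_assoc, ← pow_succ', ← jacobiTheta₂_neg_left, ← jacobiTheta₂_add_left,
      ← jacobiTheta₂_add_left, ← jacobiTheta₂_add_left] at h
    convert h using 2
    ring

lemma jacobiTheta₂_two_thirds_add_half_period_ne_zero {τ : ℂ} (hτ : 0 < τ.im) :
    jacobiTheta₂ (2 / 3 + τ / 2 + 1 / 2) τ ≠ 0 := by
  intro h0
  obtain ⟨k, hk⟩ := exists_jacobiTheta₂_add_half_period_two_pow_ne_zero (2 / 3 + 1 / 2)
    (by
      intro h
      have h1 := congrArg Complex.re h
      rw [show (2 * Real.pi * I * ((2 / 3 + 1 / 2 : ℝ) : ℂ) : ℂ) =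
        ((Real.pi / 3 + 2 * Real.pi : ℝ) : ℂ) * I by push_cast; ring, exp_ofReal_mul_I_re,
        Real.cos_add_two_pi, Real.cos_pi_div_three] at h1
      norm_num at h1) hτ
  push_cast at hk
  refine hk ?_
  clear hk
  suffices hmain : jacobiTheta₂ (2 / 3 + 2 ^ k * τ / 2 + 1 / 2) (2 ^ k * τ) = 0 by
    rw [← hmain]
    congr 1
    ring
  induction k with
  | zero => simpa using h0
  | succ k ih =>
    have h := jacobiTheta₂_duplication_eq_zero (two_pow_mul_im_pos hτ k) ih
    rw [← mul_assoc, ← pow_succ', ← jacobiTheta₂_neg_left, ← jacobiTheta₂_add_left,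
      ← jacobiTheta₂_add_left, ← jacobiTheta₂_add_left] at h
    have h' := jacobiTheta₂_add_left'
      (-(2 * (2 / 3 + 2 ^ k * τ / 2) + 1 / 2) + 1 + 1 + 1) (2 ^ (k + 1) * τ)
    rw [h, mul_zero] at h'
    convert h' using 2
    ring

lemma two_mul_ηc_div_pi : 2 * ηc / Real.pi = 2 / 3 := by
  have hπ : (Real.pi : ℂ) ≠ 0 := by exact_mod_cast Real.pi_ne_zero
  rw [ηc]
  field_simp

lemma th4_two_mul_ηc_ne_zero {τ : ℂ} (hτ : 0 < τ.im) : th4 (2 * ηc) τ ≠ 0 := by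
  rw [th4_eq_jacobiTheta₂, two_mul_ηc_div_pi]
  exact jacobiTheta₂_two_thirds_add_half_ne_zero hτ

lemma th1_two_mul_ηc_ne_zero {τ : ℂ} (hτ : 0 < τ.im) : th1 (2 * ηc) τ ≠ 0 := by
  rw [th1_eq_jacobiTheta₂, two_mul_ηc_div_pi]
  exact mul_ne_zero (mul_ne_zero (neg_ne_zero.mpr I_ne_zero) (Complex.exp_ne_zero _))
    (jacobiTheta₂_two_thirds_add_half_period_ne_zero hτ)

lemma th1_zero (τ : ℂ) : th1 0 τ = 0 := by
  have h := th1_neg 0 τ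
  rw [neg_zero] at h
  exact self_eq_neg.mp h

lemma exists_th4_add_pi_mul (z τ : ℂ) :
    ∃ c : ℂ, c ≠ 0 ∧ th4 (z + Real.pi * τ) (2 * τ) = c * th1 z (2 * τ) := by
  have hπ : (Real.pi : ℂ) ≠ 0 := by exact_mod_cast Real.pi_ne_zero
  have hc : -I * cexp (Real.pi * I * (2 * τ) / 4 + I * z) ≠ 0 :=
    mul_ne_zero (neg_ne_zero.mpr I_ne_zero) (Complex.exp_ne_zero _)
  refine ⟨_, inv_ne_zero hc, ?_⟩
  rw [th1_eq_jacobiTheta₂, inv_mul_cancel_left₀ hc, th4_eq_jacobiTheta₂, add_div,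
    mul_div_cancel_left₀ _ hπ, mul_div_cancel_left₀ _ two_ne_zero]

lemma exists_th1_add_pi_mul (z τ : ℂ) :
    ∃ c : ℂ, c ≠ 0 ∧ th1 (z + Real.pi * τ) (2 * τ) = c * th4 z (2 * τ) := by
  have hπ : (Real.pi : ℂ) ≠ 0 := by exact_mod_cast Real.pi_ne_zero
  rw [th1_eq_jacobiTheta₂, th4_eq_jacobiTheta₂, add_div, mul_div_cancel_left₀ _ hπ,
    mul_div_cancel_left₀ _ two_ne_zero, show z / Real.pi + τ + τ + 1 / 2 =
      z / Real.pi + 1 / 2 + 2 * τ by ring, jacobiTheta₂_add_left', ← mul_assoc]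
  exact ⟨_, mul_ne_zero (mul_ne_zero (neg_ne_zero.mpr I_ne_zero) (Complex.exp_ne_zero _))
    (Complex.exp_ne_zero _), rfl⟩

lemma weights_neg_two_mul_β2c {τ : ℂ} (hτ : 0 < τ.im) :
    av τ (-(2 * β2c)) = 0 ∧ dv τ (-(2 * β2c)) = 0 ∧ rv τ (-(2 * β2c)) ≠ 0 := by
  have hτ2 : 0 < (2 * τ).im := by simpa using hτ
  have e1 : -(2 * β2c) + 2 * ηc = -(0 + Real.pi) := by rw [β2c]; ring
  have e2 : 2 * β2c = 2 * ηc + Real.pi := by rw [β2c]; ring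
  have ha : av τ (-(2 * β2c)) = 0 := by rw [av, e1, th1_neg, th1_add_pi, th1_zero]; simp
  refine ⟨ha, by rw [dv, e1, th1_neg, th1_add_pi, th1_zero]; simp, ?_⟩
  rw [rv, ha, zero_add, bv, e1, th4_neg, th4_add_pi, th1_neg, e2, th1_add_pi, neg_neg]
  exact mul_ne_zero (mul_ne_zero (th4_two_mul_ηc_ne_zero hτ2) (th4_zero_ne_zero hτ2))
    (th1_two_mul_ηc_ne_zero hτ2)

lemma weights_neg_two_mul_β4c {τ : ℂ} (hτ : 0 < τ.im) :
    bv τ (-(2 * β4c τ)) = 0 ∧ cv τ (-(2 * β4c τ)) = 0 ∧ rv τ (-(2 * β4c τ)) ≠ 0 := by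
  have hτ2 : 0 < (2 * τ).im := by simpa using hτ
  have e1 : -(2 * β4c τ) + 2 * ηc = -(0 + Real.pi * τ) := by rw [β4c]; ring
  have e2 : 2 * β4c τ = 2 * ηc + Real.pi * τ := by rw [β4c]; ring
  obtain ⟨c, -, h4⟩ := exists_th4_add_pi_mul 0 τ
  obtain ⟨c', hc', h4'⟩ := exists_th4_add_pi_mul (2 * ηc) τ
  obtain ⟨d, hd, h1⟩ := exists_th1_add_pi_mul 0 τ
  have hb : bv τ (-(2 * β4c τ)) = 0 := by rw [bv, e1, th4_neg, h4, th1_zero]; simp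
  refine ⟨hb, by rw [cv, e1, th4_neg, h4, th1_zero]; simp, ?_⟩
  rw [rv, hb, add_zero, av, e1, th1_neg, h1, th4_neg, e2, h4']
  exact mul_ne_zero (mul_ne_zero (th4_two_mul_ηc_ne_zero hτ2)
    (neg_ne_zero.mpr (mul_ne_zero hd (th4_zero_ne_zero hτ2))))
    (mul_ne_zero hc' (th1_two_mul_ηc_ne_zero hτ2))

lemma weights_neg_two_mul_β3c {τ : ℂ} (hτ : 0 < τ.im) :
    bv τ (-(2 * β3c τ)) = 0 ∧ cv τ (-(2 * β3c τ)) = 0 ∧ rv τ (-(2 * β3c τ)) ≠ 0 := by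
  have e1 : -(2 * β4c τ) + 2 * ηc = -(2 * β3c τ) + 2 * ηc + Real.pi := by rw [β3c, β4c]; ring
  have e2 : -(2 * β4c τ) = -(2 * β3c τ) + Real.pi := by rw [β3c, β4c]; ring
  have h := weights_neg_two_mul_β4c hτ
  rw [rv, bv, cv, av, e1, e2, th4_add_pi, th4_add_pi, th1_add_pi, th1_add_pi] at h
  rw [rv, bv, cv, av]
  refine ⟨by linear_combination -h.1, h.2.1, fun h0 => h.2.2 ?_⟩
  linear_combination -h0

lemma weights_neg_two_mul_ηc {τ : ℂ} (hτ : 0 < τ.im) :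
    bv τ (-(2 * ηc)) = -cv τ (-(2 * ηc)) ∧ cv τ (-(2 * ηc)) ≠ 0 := by
  have hτ2 : 0 < (2 * τ).im := by simpa using hτ
  rw [bv, cv, neg_add_cancel, th1_neg, th4_neg]
  exact ⟨by ring, mul_ne_zero (mul_ne_zero (th1_two_mul_ηc_ne_zero hτ2) (th4_zero_ne_zero hτ2))
    (th4_two_mul_ηc_ne_zero hτ2)⟩

lemma fin_two_cases (s : Fin 2) : s = 0 ∨ s = 1 := by omega

lemma applyRc_apply_of_eq (τ v : ℂ) {L : ℕ} {p q : Fin L} (ψ : (Fin L → Fin 2) → ℂ)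
    (ha : av τ v = 0) (hd : dv τ v = 0) {α : Fin L → Fin 2} (hα : α p = α q) :
    applyRc τ v p q ψ α = 0 := by
  rcases fin_two_cases (α q) with h | h <;>
    simp [applyRc, Rcheckent, Rent, hα, h, ha, hd, Fin.sum_univ_two]

lemma applyRc_apply_of_ne (τ v : ℂ) {L : ℕ} {p q : Fin L} (ψ : (Fin L → Fin 2) → ℂ)
    {α : Fin L → Fin 2} (hα : α p ≠ α q) :
    applyRc τ v p q ψ α = cv τ v * ψ α + bv τ v * ψ (α ∘ Equiv.swap p q) := by
  have hpq : p ≠ q := fun h => hα (congrArg α h)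
  have hid : Function.update (Function.update α p (α p)) q (α q) = α := by simp
  have hsw : Function.update (Function.update α p (α q)) q (α p) = α ∘ Equiv.swap p q := by
    funext l
    rw [Function.comp_apply, Equiv.swap_apply_def]
    by_cases hq : l = q
    · simp [hq, hpq.symm]
    · by_cases hp : l = p <;> simp [hq, hp, hpq]
  rcases fin_two_cases (α p) with h | h <;> rcases fin_two_cases (α q) with h' | h'
  · exact absurd (h.trans h'.symm) hα
  · rw [h, h'] at hid hsw
    simp [applyRc, Rcheckent, Rent, h, h', Fin.sum_univ_two, hid, hsw]
  · rw [h, h'] at hid hsw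
    simp [applyRc, Rcheckent, Rent, h, h', Fin.sum_univ_two, hid, hsw, add_comm]
  · exact absurd (h.trans h'.symm) hα

section Exchange

variable {τ : ℂ} {Ψ : PsiFam} {n : ℕ} {u : Fin (2 * n + 1) → ℂ} {p q : Fin (2 * n + 1)}

lemma PsiP1.applyRc_swap (h1 : PsiP1 τ Ψ) (hpq : (q : ℕ) = p + 1) (α : Fin (2 * n + 1) → Fin 2) :
    applyRc τ (u p - u q) p q (Ψ n fun l => u (Equiv.swap p q l)) α =
      rv τ (u p - u q) * Ψ n u α := by
  have h := congrFun (h1 n (fun l => u (Equiv.swap p q l)) p q hpq) α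
  simpa using h

lemma PsiP1.eq_zero_of_parallel (h1 : PsiP1 τ Ψ) (hpq : (q : ℕ) = p + 1)
    (ha : av τ (u p - u q) = 0) (hd : dv τ (u p - u q) = 0) (hr : rv τ (u p - u q) ≠ 0)
    {α : Fin (2 * n + 1) → Fin 2} (hα : α p = α q) : Ψ n u α = 0 := by
  have h := h1.applyRc_swap (u := u) hpq α
  rw [applyRc_apply_of_eq _ _ _ ha hd hα] at h
  exact (mul_eq_zero.mp h.symm).resolve_left hr

lemma PsiP1.eq_zero_of_antiparallel (h1 : PsiP1 τ Ψ) (hpq : (q : ℕ) = p + 1)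
    (hb : bv τ (u p - u q) = 0) (hc : cv τ (u p - u q) = 0) (hr : rv τ (u p - u q) ≠ 0)
    {α : Fin (2 * n + 1) → Fin 2} (hα : α p ≠ α q) : Ψ n u α = 0 := by
  have h := h1.applyRc_swap (u := u) hpq α
  rw [applyRc_apply_of_ne _ _ _ hα, hb, hc, zero_mul, zero_mul, zero_add] at h
  exact (mul_eq_zero.mp h.symm).resolve_left hr

lemma PsiP1.comp_swap_eq (h1 : PsiP1 τ Ψ) (hpq : (q : ℕ) = p + 1)
    (hbc : bv τ (u q - u p) = -cv τ (u q - u p)) (hc : cv τ (u q - u p) ≠ 0)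
    (hswap : (Ψ n fun l => u (Equiv.swap p q l)) = 0) (α : Fin (2 * n + 1) → Fin 2) :
    Ψ n u (α ∘ Equiv.swap p q) = Ψ n u α := by
  by_cases hα : α p = α q
  · congr 1
    funext l
    rw [Function.comp_apply, Equiv.swap_apply_def]
    split_ifs with hp hq
    · rw [hp, hα]
    · rw [hq, hα]
    · rfl
  · have h := congrFun (h1 n u p q hpq) α
    rw [applyRc_apply_of_ne _ _ _ hα, hbc, hswap, Pi.zero_apply, mul_zero] at h
    refine (mul_left_cancel₀ hc ?_).symm
    linear_combination h

/-- The wheel condition with the third parameter shifted by `π`. -/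
lemma PsiP4.eq_zero_of_last_eq_zero (h4 : PsiP4 Ψ) (h3 : PsiP3 τ Ψ) {k : Fin (2 * n + 1)}
    (hpq : p < q) (hqk : q < k) (hp : u p = -ηc) (hq : u q = ηc) (hk : u k = 0) :
    Ψ n u = 0 := by
  have hwheel : Ψ n (Function.update u k (u k + Real.pi)) = 0 := by
    refine h4 n _ ⟨p, q, k, hpq, hqk, ?_, ?_⟩
    · rw [Function.update_of_ne hqk.ne, Function.update_of_ne (hpq.trans hqk).ne, hp, hq]
      ring
    · rw [Function.update_self, Function.update_of_ne (hpq.trans hqk).ne, hp, hk, ηc]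
      ring
  funext α
  have h := congrFun ((h3 n u k).1.symm.trans hwheel) α
  refine (mul_eq_zero.mp h).resolve_left (Finset.prod_ne_zero_iff.mpr fun j _ => ?_)
  split_ifs <;> norm_num

end Exchange

section Interleave

variable {n : ℕ} (x : Fin n → ℂ) (i : Fin n)

lemma interleave_even (h : 2 * (i : ℕ) < 2 * n + 1) : interleave x ⟨2 * i, h⟩ = x i := by
  simp [interleave]

lemma interleave_odd (h : 2 * (i : ℕ) + 1 < 2 * n + 1) :
    interleave x ⟨2 * i + 1, h⟩ = -x i := by
  have h1 : (2 * (i : ℕ) + 1) / 2 = i := by omega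
  have h2 : 2 * (i : ℕ) + 1 < 2 * n := by omega
  have h3 : (2 * (i : ℕ) + 1) % 2 = 1 := by omega
  simp [interleave, h1, h2, h3]

lemma interleave_last (h : 2 * n < 2 * n + 1) : interleave x ⟨2 * n, h⟩ = 0 := by
  simp [interleave]

end Interleave

lemma chiC_eq_zero (τ lam x : ℂ) {s t : Fin 2} (h : s = t) : chiC τ lam x s t = 0 := by
  subst h
  rcases fin_two_cases s with h | h <;> simp [chiC, h]

lemma chibarC_eq_zero (τ lam x : ℂ) {s t : Fin 2} (h : s ≠ t) : chibarC τ lam x s t = 0 := by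
  rw [chibarC, if_neg fun h' => h (h'.1.trans h'.2.symm),
    if_neg fun h' => h (h'.1.trans h'.2.symm)]

lemma chiC_ηc_swap (τ lam : ℂ) (s t : Fin 2) : chiC τ lam ηc t s = -chiC τ lam ηc s t := by
  have e : ηc - lam - 2 * ηc = -(ηc + lam) := by ring
  simp only [chiC, e, th1_neg, th4_neg]
  rcases fin_two_cases s with h | h <;> rcases fin_two_cases t with h' | h' <;> simp [h, h']

section ScalarProducts

variable {τ lam : ℂ} {Ψ : PsiFam} {n : ℕ} {x : Fin n → ℂ} (i : Fin n)

lemma Zfun_eq_zero_of_antiparallel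
    (h : ∀ α : Fin (2 * n + 1) → Fin 2,
      α ⟨2 * i, by omega⟩ ≠ α ⟨2 * i + 1, by omega⟩ → Ψ n (interleave x) α = 0) :
    Zfun τ lam Ψ n x = 0 := by
  refine Finset.sum_eq_zero fun α _ => ?_
  by_cases hα : α ⟨2 * i, by omega⟩ = α ⟨2 * i + 1, by omega⟩
  · rw [Finset.prod_eq_zero (Finset.mem_univ i) (chiC_eq_zero _ _ _ hα), zero_mul, zero_mul]
  · rw [h α hα, mul_zero]

lemma Zbarfun_eq_zero_of_parallel (ε : ℂ)
    (h : ∀ α : Fin (2 * n + 1) → Fin 2,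
      α ⟨2 * i, by omega⟩ = α ⟨2 * i + 1, by omega⟩ → Ψ n (interleave x) α = 0) :
    Zbarfun τ lam ε Ψ n x = 0 := by
  refine Finset.sum_eq_zero fun α _ => ?_
  by_cases hα : α ⟨2 * i, by omega⟩ = α ⟨2 * i + 1, by omega⟩
  · rw [h α hα, mul_zero]
  · rw [Finset.prod_eq_zero (Finset.mem_univ i) (chibarC_eq_zero _ _ _ hα), zero_mul, zero_mul]

lemma Zfun_eq_zero_of_symmetric (hx : x i = ηc)
    (h : ∀ α : Fin (2 * n + 1) → Fin 2,
      Ψ n (interleave x) (α ∘ Equiv.swap ⟨2 * i, by omega⟩ ⟨2 * i + 1, by omega⟩) =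
        Ψ n (interleave x) α) :
    Zfun τ lam Ψ n x = 0 := by
  refine self_eq_neg.mp ?_
  conv_lhs => rw [Zfun, ← Equiv.sum_comp (Equiv.arrowCongr
    (Equiv.swap (⟨2 * i, by omega⟩ : Fin (2 * n + 1)) ⟨2 * i + 1, by omega⟩) (Equiv.refl (Fin 2)))]
  rw [Zfun, ← Finset.sum_neg_distrib]
  refine Finset.sum_congr rfl fun α _ => ?_
  have hcomp : Equiv.arrowCongr (Equiv.swap (⟨2 * i, by omega⟩ : Fin (2 * n + 1))
      ⟨2 * i + 1, by omega⟩) (Equiv.refl (Fin 2)) α =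
      α ∘ Equiv.swap ⟨2 * i, by omega⟩ ⟨2 * i + 1, by omega⟩ := rfl
  rw [hcomp, h α, ← neg_mul, ← neg_mul]
  congr 2
  · rw [← Finset.mul_prod_erase _ _ (Finset.mem_univ i),
      ← Finset.mul_prod_erase _ _ (Finset.mem_univ i), ← neg_mul, hx]
    congr 1
    · simp only [Function.comp_apply, Equiv.swap_apply_left, Equiv.swap_apply_right]
      exact chiC_ηc_swap _ _ _ _
    · refine Finset.prod_congr rfl fun m hm => ?_
      have hmi : (m : ℕ) ≠ i := fun h => (Finset.ne_of_mem_erase hm) (Fin.ext h)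
      simp only [Function.comp_apply]
      rw [Equiv.swap_apply_of_ne_of_ne, Equiv.swap_apply_of_ne_of_ne] <;>
        · simp only [ne_eq, Fin.mk.injEq]
          omega
  · rw [Function.comp_apply, Equiv.swap_apply_of_ne_of_ne] <;>
      · simp only [ne_eq, Fin.mk.injEq]
        omega

end ScalarProducts

theorem stmt12 (τ lam : ℂ) (hτ : 0 < τ.im) (Ψ : PsiFam)
    (hent : PsiEntire Ψ) (h1 : PsiP1 τ Ψ) (h3 : PsiP3 τ Ψ) (h4 : PsiP4 Ψ)
    (n : ℕ) (hn : 1 ≤ n) (x : Fin n → ℂ) (i : Fin n) :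
    Zfun τ lam Ψ n (Function.update x i (-ηc)) = 0 ∧
    Zfun τ lam Ψ n (Function.update x i ηc) = 0 ∧
    Zfun τ lam Ψ n (Function.update x i (-(β3c τ))) = 0 ∧
    Zfun τ lam Ψ n (Function.update x i (-(β4c τ))) = 0 ∧
    Zbarfun τ lam 1 Ψ n (Function.update x i (-ηc)) = 0 ∧
    Zbarfun τ lam 1 Ψ n (Function.update x i (-β2c)) = 0 ∧
    Zbarfun τ lam (-1) Ψ n (Function.update x i (-ηc)) = 0 ∧
    Zbarfun τ lam (-1) Ψ n (Function.update x i (-β2c)) = 0 := by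
  have hpq : ((⟨2 * i + 1, by omega⟩ : Fin (2 * n + 1)) : ℕ) =
    ((⟨2 * i, by omega⟩ : Fin (2 * n + 1)) : ℕ) + 1 := rfl
  have hdiff (y : ℂ) : interleave (Function.update x i y) ⟨2 * i, by omega⟩ -
      interleave (Function.update x i y) ⟨2 * i + 1, by omega⟩ = 2 * y := by
    rw [interleave_even, interleave_odd, Function.update_self]
    ring
  have hwheel : Ψ n (interleave (Function.update x i (-ηc))) = 0 :=
    h4.eq_zero_of_last_eq_zero h3 (p := ⟨2 * i, by omega⟩) (q := ⟨2 * i + 1, by omega⟩)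
      (k := ⟨2 * n, by omega⟩) (by simp) (by simp only [Fin.mk_lt_mk]; omega)
      (by rw [interleave_even, Function.update_self])
      (by rw [interleave_odd, Function.update_self, neg_neg]) (interleave_last _ _)
  have hanti (y : ℂ) (hy : bv τ (-(2 * y)) = 0 ∧ cv τ (-(2 * y)) = 0 ∧ rv τ (-(2 * y)) ≠ 0) :
      Zfun τ lam Ψ n (Function.update x i (-y)) = 0 := by
    rw [← mul_neg, ← hdiff] at hy
    exact Zfun_eq_zero_of_antiparallel i fun α hα =>
      h1.eq_zero_of_antiparallel hpq hy.1 hy.2.1 hy.2.2 hα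
  have hpar (ε : ℂ) : Zbarfun τ lam ε Ψ n (Function.update x i (-β2c)) = 0 := by
    have hy := weights_neg_two_mul_β2c hτ
    rw [← mul_neg, ← hdiff] at hy
    exact Zbarfun_eq_zero_of_parallel i ε fun α hα =>
      h1.eq_zero_of_parallel hpq hy.1 hy.2.1 hy.2.2 hα
  have hbar (ε : ℂ) : Zbarfun τ lam ε Ψ n (Function.update x i (-ηc)) = 0 :=
    Zbarfun_eq_zero_of_parallel i ε fun α _ => congrFun hwheel α
  refine ⟨Zfun_eq_zero_of_antiparallel i fun α _ => congrFun hwheel α, ?_,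
    hanti _ (weights_neg_two_mul_β3c hτ), hanti _ (weights_neg_two_mul_β4c hτ),
    hbar 1, hpar 1, hbar (-1), hpar (-1)⟩
  have hη := weights_neg_two_mul_ηc hτ
  rw [← hdiff ηc, neg_sub] at hη
  refine Zfun_eq_zero_of_symmetric i (Function.update_self ..)
    (h1.comp_swap_eq hpq hη.1 hη.2 ?_)
  refine h4.eq_zero_of_last_eq_zero h3 (p := ⟨2 * i, by omega⟩) (q := ⟨2 * i + 1, by omega⟩)
    (k := ⟨2 * n, by omega⟩) (by simp) (by simp only [Fin.mk_lt_mk]; omega) ?_ ?_ ?_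
  · rw [Equiv.swap_apply_left, interleave_odd, Function.update_self]
  · rw [Equiv.swap_apply_right, interleave_even, Function.update_self]
  · rw [Equiv.swap_apply_of_ne_of_ne, interleave_last] <;>
      · simp only [ne_eq, Fin.mk.injEq]
        omega

end
end
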